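/- arXiv:1701.05212 — 5 statements merged into one kernel-verified Lean document; each statement's English description precedes it below -/
import Mathlib

section
/- For every integer t with 1 ≤ t ≤ 25 there exists a linear code over the field with 64 elements of length 78, dimension 2t, minimum distance at least 76 − 3t, and locality 2. In particular (t = 21), there exists a linear code over the field with 64 elements of length 78, dimension 42, minimum distance at least 13, and locality 2. -/
open Polynomial

namespace LRC
variable {F : Type*} [Field F]

lemma cube_cond (h2 : (2:F) = 0) (c : F) (hG : c^0 + c^1 + c^2 + c^4 + c^6 + c^7 + c^8 + c^9 + c^11 + c^13 = 0) : c^21 = 1 := by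
  linear_combination (c^0 + c^1 + c^3 + c^6 + c^8) * hG - (1*c^1 + 1*c^2 + 1*c^3 + 1*c^4 + 1*c^5 + 1*c^6 + 2*c^7 + 2*c^8 + 2*c^9 + 2*c^10 + 1*c^11 + 2*c^12 + 1*c^13 + 2*c^14 + 1*c^15 + 1*c^16 + 1*c^17 + 1*c^19 + 1) * h2

lemma trace_factor (h2 : (2:F) = 0) (c : F) (hT : c + c^2 + c^4 + c^8 + c^16 + c^32 = 0) :
    (c^0 + c^1 + c^2 + c^4 + c^6 + c^7 + c^8 + c^9 + c^11 + c^13) * (c^1 + c^3 + c^11 + c^12 + c^14 + c^17 + c^19) = 0 := by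
  linear_combination hT + (1*c^3 + 1*c^5 + 1*c^7 + 1*c^9 + 1*c^10 + 1*c^11 + 2*c^12 + 1*c^13 + 2*c^14 + 1*c^15 + 1*c^16 + 1*c^17 + 2*c^18 + 2*c^19 + 2*c^20 + 2*c^21 + 1*c^22 + 2*c^23 + 1*c^24 + 2*c^25 + 1*c^26 + 1*c^27 + 1*c^28 + 1*c^30) * h2

lemma trace_zero (h2 : (2:F) = 0) (y : F) (hy : y^64 = y) (c : F) (hc : c = y^2 + y) :
    c + c^2 + c^4 + c^8 + c^16 + c^32 = 0 := by
  have sq : ∀ a b : F, (a + b)^2 = a^2 + b^2 := fun a b => by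
    linear_combination a * b * h2
  have e1 : c^2 = y^4 + y^2 := by rw [hc, sq]; ring
  have e2 : c^4 = y^8 + y^4 := by
    rw [show c^4 = (c^2)^2 by ring, e1, sq]; ring
  have e3 : c^8 = y^16 + y^8 := by
    rw [show c^8 = (c^4)^2 by ring, e2, sq]; ring
  have e4 : c^16 = y^32 + y^16 := by
    rw [show c^16 = (c^8)^2 by ring, e3, sq]; ring
  have e5 : c^32 = y^64 + y^32 := by
    rw [show c^32 = (c^16)^2 by ring, e4, sq]; ring
  rw [e1, e2, e3, e4, e5, hc, hy]
  linear_combination (y + y^2 + y^4 + y^8 + y^16 + y^32) * h2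

lemma many_points [Fintype F] [DecidableEq F] (hF : Fintype.card F = 64) (h2 : (2:F) = 0) :
    26 ≤ (Finset.univ.filter (fun y : F => (y^2+y)^21 = 1)).card := by
  let H : F[X] := X + X^3 + X^11 + X^12 + X^14 + X^17 + X^19
  have hH : H.natDegree = 19 := by
    simp only [H]; compute_degree!
  let Q : F[X] := H.comp (X^2 + X)
  have hQ : Q.natDegree = 38 := by
    have : (X^2 + X : F[X]).natDegree = 2 := by compute_degree!
    simp only [Q, natDegree_comp, hH, this]
  have hQ0 : Q ≠ 0 := by
    intro h; rw [h] at hQ; simp at hQ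
  have hcard : Q.roots.toFinset.card ≤ 38 :=
    (Multiset.toFinset_card_le _).trans ((card_roots' Q).trans hQ.le)
  have hcov : (Finset.univ : Finset F) ⊆
      (Finset.univ.filter (fun y : F => (y^2+y)^21 = 1)) ∪ Q.roots.toFinset := by
    intro y _
    have hy : y^64 = y := by rw [← hF]; exact FiniteField.pow_card y
    have := trace_factor h2 (y^2+y) (trace_zero h2 y hy _ rfl)
    rcases mul_eq_zero.1 this with h | h
    · exact Finset.mem_union_left _ (by simpa using cube_cond h2 _ h)
    · refine Finset.mem_union_right _ ?_
      rw [Multiset.mem_toFinset, mem_roots hQ0, IsRoot.def]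
      simp only [Q, H, eval_comp, eval_add, eval_pow, eval_X]
      linear_combination h
  have h1 := Finset.card_le_card hcov
  have h3 := Finset.card_union_le (Finset.univ.filter (fun y : F => (y^2+y)^21 = 1)) Q.roots.toFinset
  rw [Finset.card_univ, hF] at h1
  omega

lemma exists_gen [Fintype F] (hF : Fintype.card F = 64) :
    (∃ w : F, w^2 + w + 1 = 0) ∧ ∀ c : F, c^21 = 1 → ∃ x : F, x ≠ 0 ∧ x^3 = c := by
  classical
  obtain ⟨g, hg⟩ := IsCyclic.exists_generator (α := Fˣ)
  have ho : orderOf g = 63 := by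
    rw [orderOf_eq_card_of_forall_mem_zpowers hg, Nat.card_eq_fintype_card, Fintype.card_units, hF]
  have hgF : (g : F)^63 = 1 := by
    have := pow_orderOf_eq_one g
    rw [ho] at this
    rw [← Units.val_pow_eq_pow_val, this, Units.val_one]
  constructor
  · refine ⟨(g : F)^21, ?_⟩
    have h1 : (g : F)^21 - 1 ≠ 0 := by
      intro h
      have h' : g^21 = 1 := by
        ext; push_cast; linear_combination h
      have := orderOf_dvd_of_pow_eq_one h'
      rw [ho] at this
      omega
    apply mul_left_cancel₀ h1
    linear_combination hgF
  · intro c hc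
    have hc0 : c ≠ 0 := by rintro rfl; simp at hc
    obtain ⟨k, hk⟩ := (Submonoid.mem_powers_iff _ _).1
      ((mem_powers_iff_mem_zpowers (x := g)).2 (hg (Units.mk0 c hc0)))
    have h21 : g^(k*21) = 1 := by
      rw [pow_mul, hk]; ext; push_cast; simpa using hc
    have := orderOf_dvd_of_pow_eq_one h21
    rw [ho] at this
    obtain ⟨m, rfl⟩ : 3 ∣ k := by omega
    refine ⟨(g:F)^m, by simp, ?_⟩
    have := congrArg Units.val hk
    push_cast at this
    rw [← pow_mul, mul_comm, this]; rfl

lemma norm_ne_zero (f0 f1 : F[X]) (h : ¬ (f0 = 0 ∧ f1 = 0)) :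
    f0^3 + f1^3 * (X^2 + X) ≠ 0 := by
  intro hN
  have hd : (X^2 + X : F[X]).natDegree = 2 := by compute_degree!
  have hd0 : (X^2 + X : F[X]) ≠ 0 := by intro h; rw [h] at hd; simp at hd
  have he : f0^3 = -(f1^3 * (X^2 + X)) := by linear_combination hN
  by_cases h1 : f1 = 0
  · subst h1
    apply h
    refine ⟨?_, rfl⟩
    simpa using he
  · have := congrArg natDegree he
    rw [natDegree_neg, natDegree_mul (pow_ne_zero _ h1) hd0, natDegree_pow, natDegree_pow, hd] at this
    omega

lemma norm_natDegree (t : ℕ) (ht : 0 < t) (f0 f1 : F[X]) (h0 : f0.degree < t) (h1 : f1.degree < t) :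
    (f0^3 + f1^3 * (X^2 + X)).natDegree < 3 * t := by
  have hd : (X^2 + X : F[X]).natDegree = 2 := by compute_degree!
  have a0 : f0.natDegree < t := by
    by_cases h : f0 = 0
    · simpa [h] using ht
    · exact (natDegree_lt_iff_degree_lt h).2 h0
  have a1 : f1.natDegree < t := by
    by_cases h : f1 = 0
    · simpa [h] using ht
    · exact (natDegree_lt_iff_degree_lt h).2 h1
  have b0 : (f0^3).natDegree ≤ 3 * f0.natDegree := natDegree_pow_le
  have b1 : (f1^3).natDegree ≤ 3 * f1.natDegree := natDegree_pow_le
  have b2 : (f1^3 * (X^2+X)).natDegree ≤ (f1^3).natDegree + (X^2+X : F[X]).natDegree := natDegree_mul_le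
  have := natDegree_add_le (f0^3) (f1^3 * (X^2 + X))
  rw [hd] at b2
  rcases le_max_iff.1 this with h | h <;> omega

lemma fibre_card [DecidableEq F] (f0 f1 : F[X]) (y : F) (p : Fin 3 → F) (hp : Function.Injective p)
    (hp3 : ∀ k, p k ^ 3 = y^2 + y) (hN : f0^3 + f1^3 * (X^2 + X) ≠ 0) :
    (Finset.univ.filter (fun k => f0.eval y + f1.eval y * p k = 0)).card ≤
      rootMultiplicity y (f0^3 + f1^3 * (X^2 + X)) := by
  by_cases h1 : f1.eval y = 0
  · by_cases h0 : f0.eval y = 0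
    · refine (Finset.card_le_univ _).trans ?_
      rw [Fintype.card_fin, le_rootMultiplicity_iff hN]
      have d0 : (X - C y) ∣ f0 := dvd_iff_isRoot.2 h0
      have d1 : (X - C y) ∣ f1 := dvd_iff_isRoot.2 h1
      exact dvd_add (pow_dvd_pow_of_dvd d0 3) ((pow_dvd_pow_of_dvd d1 3).mul_right _)
    · simp [h1, h0]
  · by_cases hex : ∃ k, f0.eval y + f1.eval y * p k = 0
    · obtain ⟨k, hk⟩ := hex
      have hr : 1 ≤ rootMultiplicity y (f0^3 + f1^3 * (X^2 + X)) := by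
        rw [Nat.one_le_iff_ne_zero, ← Nat.pos_iff_ne_zero, rootMultiplicity_pos hN, IsRoot.def]
        simp only [eval_add, eval_mul, eval_pow, eval_X]
        rw [← hp3 k, ← mul_pow, show f0.eval y = -(f1.eval y * p k) by linear_combination hk]
        ring
      refine le_trans ?_ hr
      rw [Finset.card_le_one]
      intro a ha b hb
      simp only [Finset.mem_filter, Finset.mem_univ, true_and] at ha hb
      apply hp
      apply mul_left_cancel₀ h1
      linear_combination ha - hb
    · push Not at hex
      simp [hex]

lemma zeros_card [DecidableEq F] (t : ℕ) (ht : 0 < t) (f0 f1 : F[X]) (h0 : f0.degree < t) (h1 : f1.degree < t)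
    (h : ¬ (f0 = 0 ∧ f1 = 0)) (y : Fin 26 → F) (hy : Function.Injective y)
    (p : Fin 26 → Fin 3 → F) (hp : ∀ j, Function.Injective (p j))
    (hp3 : ∀ j k, p j k ^ 3 = y j ^2 + y j) :
    (Finset.univ.filter (fun a : Fin 26 × Fin 3 =>
      f0.eval (y a.1) + f1.eval (y a.1) * p a.1 a.2 = 0)).card < 3 * t := by
  have hN := norm_ne_zero f0 f1 h
  refine lt_of_le_of_lt ?_ (norm_natDegree t ht f0 f1 h0 h1)
  refine le_trans ?_ (card_roots' (f0^3 + f1^3 * (X^2 + X)))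
  rw [Finset.card_filter, Fintype.sum_prod_type]
  calc _ ≤ ∑ j, (f0^3 + f1^3 * (X^2 + X)).roots.count (y j) := by
        apply Finset.sum_le_sum
        intro j _
        rw [count_roots]
        refine le_trans (le_of_eq ?_) (fibre_card f0 f1 (y j) (p j) (hp j) (hp3 j) hN)
        rw [Finset.card_filter]
    _ = ∑ z ∈ Finset.univ.map ⟨y, hy⟩, (f0^3 + f1^3 * (X^2 + X)).roots.count z := by
        rw [Finset.sum_map]; rfl
    _ ≤ Multiset.card (f0^3 + f1^3 * (X^2 + X)).roots := by
        rw [← Multiset.toFinset_sum_count_eq]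
        apply Finset.sum_le_sum_of_ne_zero
        intro z _ hz
        exact Multiset.mem_toFinset.2 (Multiset.count_ne_zero.1 hz)
  exact le_rfl

lemma exists_config [Fintype F] (hF : Fintype.card F = 64) (h2 : (2:F) = 0) :
    ∃ (y : Fin 26 → F) (p : Fin 26 → Fin 3 → F), Function.Injective y ∧
      (∀ j, Function.Injective (p j)) ∧ (∀ j k, p j k ^ 3 = y j ^2 + y j) := by
  classical
  obtain ⟨⟨w, hw⟩, hc⟩ := exists_gen hF
  have hm := many_points hF h2
  obtain ⟨s, hs, hs26⟩ := Finset.exists_subset_card_eq hm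
  let e := (s.equivFinOfCardEq hs26).symm
  have hx : ∀ j : Fin 26, ∃ x : F, x ≠ 0 ∧ x^3 = (e j : F)^2 + (e j : F) := fun j => by
    apply hc
    have := hs (e j).2
    simpa using this
  choose x hx0 hx3 using hx
  have hw3 : w^3 = 1 := by linear_combination (w - 1) * hw
  have hw0 : w ≠ 0 := by rintro rfl; simp at hw
  have hw1 : w ≠ 1 := by
    rintro rfl
    apply one_ne_zero (α := F)
    linear_combination hw - h2
  refine ⟨fun j => e j, fun j k => x j * w^(k:ℕ), ?_, ?_, ?_⟩
  · exact Subtype.val_injective.comp e.injective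
  · intro j a b hab
    have hab' := mul_left_cancel₀ (hx0 j) hab
    have hw2 : w^2 ≠ 1 := by
      intro h; apply hw1; linear_combination hw3 - w * h
    have hw21 : w^2 ≠ w := by
      intro h; apply hw1; apply mul_left_cancel₀ hw0; linear_combination h
    fin_cases a <;> fin_cases b <;> simp_all [eq_comm]
  · intro j k
    rw [mul_pow, hx3, ← pow_mul, mul_comm (k:ℕ) 3, pow_mul, hw3]; simp

/-- The evaluation map. -/
noncomputable def ev (t : ℕ) (y : Fin 26 → F) (p : Fin 26 → Fin 3 → F) :
    (degreeLT F t × degreeLT F t) →ₗ[F] (Fin 78 → F) where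
  toFun f i := (f.1 : F[X]).eval (y ((finProdFinEquiv (m := 26) (n := 3)).symm i).1) +
    (f.2 : F[X]).eval (y ((finProdFinEquiv (m := 26) (n := 3)).symm i).1) *
      p ((finProdFinEquiv (m := 26) (n := 3)).symm i).1 ((finProdFinEquiv (m := 26) (n := 3)).symm i).2
  map_add' f g := by
    ext i; simp; ring
  map_smul' a f := by
    ext i; simp; ring

lemma ev_weight (t : ℕ) (ht : 0 < t) (y : Fin 26 → F) (hy : Function.Injective y)
    (p : Fin 26 → Fin 3 → F) (hp : ∀ j, Function.Injective (p j))
    (hp3 : ∀ j k, p j k ^ 3 = y j ^2 + y j) (f : degreeLT F t × degreeLT F t) (hf : f ≠ 0) :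
    79 - 3 * t ≤ Nat.card {i : Fin 78 // ev t y p f i ≠ 0} := by
  classical
  have hz := zeros_card t ht f.1 f.2 (mem_degreeLT.1 f.1.2) (mem_degreeLT.1 f.2.2)
    (by
      rintro ⟨h1, h2⟩
      exact hf (Prod.ext (Subtype.ext h1) (Subtype.ext h2))) y hy p hp hp3
  have hcard : (Finset.univ.filter (fun i : Fin 78 => ev t y p f i = 0)).card =
      (Finset.univ.filter (fun a : Fin 26 × Fin 3 =>
      (f.1 : F[X]).eval (y a.1) + (f.2 : F[X]).eval (y a.1) * p a.1 a.2 = 0)).card := by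
    refine Finset.card_equiv ((finProdFinEquiv (m := 26) (n := 3)).symm) ?_
    intro i
    rw [Finset.mem_filter, Finset.mem_filter]
    simp only [Finset.mem_univ, true_and]
    exact Iff.rfl
  have hs := Finset.card_filter_add_card_filter_not (s := (Finset.univ : Finset (Fin 78)))
    (fun i => ev t y p f i = 0)
  rw [Nat.card_eq_fintype_card, Fintype.card_subtype]
  simp only [Finset.card_univ, Fintype.card_fin] at hs
  simp only [ne_eq]
  omega

lemma local_rec (A B A' B' u v w : F) (huv : u ≠ v)
    (h1 : A + B * u = A' + B' * u) (h2 : A + B * v = A' + B' * v) :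
    A + B * w = A' + B' * w := by
  have hB : B = B' := by
    apply mul_right_cancel₀ (sub_ne_zero.2 huv)
    linear_combination h1 - h2
  subst hB
  linear_combination h1

end LRC

open LRC in
/-- Example 3.1: for each `1 ≤ t ≤ 25` there is a linear code over `F_64` of length 78,
dimension `2t`, minimum distance at least `76 - 3t`, and locality 2. -/
theorem exists_LRC_F64_length78 :
    ∀ t : ℕ, 1 ≤ t → t ≤ 25 →
      ∃ C : Submodule (GaloisField 2 6) (Fin 78 → GaloisField 2 6),
        Module.finrank (GaloisField 2 6) C = 2 * t ∧
        (∀ x : Fin 78 → GaloisField 2 6, x ∈ C → x ≠ 0 →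
          76 - 3 * t ≤ Nat.card {i : Fin 78 // x i ≠ 0}) ∧
        (∀ i : Fin 78, ∃ I : Finset (Fin 78), i ∉ I ∧ I.card ≤ 2 ∧
          ∀ x ∈ C, ∀ y ∈ C, (∀ j ∈ I, x j = y j) → x i = y i) := by
  intro t ht1 ht2
  have := Fintype.ofFinite (GaloisField 2 6)
  have hF : Fintype.card (GaloisField 2 6) = 64 := by
    rw [← Nat.card_eq_fintype_card, GaloisField.card 2 6 (by norm_num)]; norm_num
  have h2 : (2 : GaloisField 2 6) = 0 := by
    exact_mod_cast CharP.cast_eq_zero (GaloisField 2 6) 2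
  obtain ⟨y, p, hy, hp, hp3⟩ := exists_config hF h2
  refine ⟨LinearMap.range (ev t y p), ?_, ?_, ?_⟩
  · have hinj : Function.Injective (ev t y p) := by
      rw [injective_iff_map_eq_zero]
      intro f hf
      by_contra hne
      have := ev_weight t ht1 y hy p hp hp3 f hne
      simp [hf] at this
      omega
    have hd : Module.finrank (GaloisField 2 6) (degreeLT (GaloisField 2 6) t) = t := by
      rw [(degreeLTEquiv (GaloisField 2 6) t).finrank_eq]; simp
    have : Module.Finite (GaloisField 2 6) (degreeLT (GaloisField 2 6) t) :=
      Module.Finite.equiv (degreeLTEquiv (GaloisField 2 6) t).symm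
    rw [LinearMap.finrank_range_of_inj hinj, Module.finrank_prod, hd]
    ring
  · rintro _ ⟨f, rfl⟩ hne
    have hf : f ≠ 0 := by rintro rfl; simp at hne
    have := ev_weight t ht1 y hy p hp hp3 f hf
    omega
  · intro i
    have hk : ∀ k : Fin 3, k + 1 ≠ k + 2 := by decide
    let e := finProdFinEquiv (m := 26) (n := 3)
    obtain ⟨⟨j, k⟩, rfl⟩ := e.surjective i
    refine ⟨{e (j, k+1), e (j, k+2)}, ?_, Finset.card_le_two, ?_⟩
    · simp only [Finset.mem_insert, Finset.mem_singleton, e.injective.eq_iff, Prod.mk.injEq, true_and]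
      revert k; decide
    · rintro _ ⟨f, rfl⟩ _ ⟨g, rfl⟩ h
      have ha := h (e (j, k+1)) (by simp)
      have hb := h (e (j, k+2)) (by simp)
      simp only [ev, LinearMap.coe_mk, AddHom.coe_mk, e, Equiv.symm_apply_apply] at ha hb ⊢
      refine local_rec _ _ _ _ _ _ _ ?_ ha hb
      intro hh
      exact absurd (hp j hh) (hk k)
end

section
/- For every integer t with 1 ≤ t ≤ 15 there exists a linear code over the field with 31 elements of length 60, dimension 3t, minimum distance at least 60 − 4t, and locality 3. In particular (t = 13), there exists a linear code over the field with 31 elements of length 60, dimension 39, minimum distance at least 8, and locality 3. -/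
namespace LRC31

open Polynomial

/-- The field with 31 elements. -/
abbrev F := ZMod 31

lemma fact31 : Fact (Nat.Prime 31) := ⟨by norm_num⟩

attribute [local instance] fact31

/-- The curve is `x² : y² : z² = Q1 : Q2 : Q3` over the projective line. -/
noncomputable def Q1 : F[X] := X ^ 2 + X + C 2
noncomputable def Q2 : F[X] := C 3 * X ^ 2 + C 11
noncomputable def Q3 : F[X] := C 3 * X + C 19

def S : Fin 15 → F := ![3, 6, 8, 9, 10, 13, 15, 18, 19, 22, 23, 24, 27, 28, 30]
def mu : Fin 15 → F := ![1, 3, 3, 3, 1, 3, 1, 3, 1, 3, 3, 3, 1, 1, 1]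
def xs : Fin 15 → F := ![13, 5, 2, 14, 9, 12, 5, 1, 14, 2, 3, 5, 13, 15, 8]
def ys : Fin 15 → F := ![10, 9, 4, 8, 1, 11, 2, 11, 3, 8, 4, 1, 11, 10, 13]
def zs : Fin 15 → F := ![11, 8, 2, 6, 7, 3, 8, 13, 13, 7, 9, 12, 10, 14, 4]
def sg : Fin 4 → F := ![1, -1, 1, -1]
def tg : Fin 4 → F := ![1, 1, -1, -1]

lemma S_inj : Function.Injective S := by
  unfold Function.Injective; decide

lemma xs_ne : ∀ j, xs j ≠ 0 := by decide
lemma ys_ne : ∀ j, ys j ≠ 0 := by decide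
lemma zs_ne : ∀ j, zs j ≠ 0 := by decide

lemma Q1_eval (j : Fin 15) : Q1.eval (S j) = mu j * xs j ^ 2 := by
  simp only [Q1, eval_add, eval_pow, eval_X, eval_C]
  revert j; decide

lemma Q2_eval (j : Fin 15) : Q2.eval (S j) = mu j * ys j ^ 2 := by
  simp only [Q2, eval_add, eval_mul, eval_pow, eval_X, eval_C]
  revert j; decide

lemma Q3_eval (j : Fin 15) : Q3.eval (S j) = mu j * zs j ^ 2 := by
  simp only [Q3, eval_add, eval_mul, eval_X, eval_C]
  revert j; decide

/-- A polynomial taking a nonsquare value is not a square in the function field. -/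
lemma not_sq (Q P R : F[X]) (s : F) (hQ : ∀ y : F, y ^ 2 ≠ Q.eval s)
    (h : Q * P ^ 2 = R ^ 2) : P = 0 := by
  by_contra hP
  obtain ⟨P', hP', hnd⟩ := exists_eq_pow_rootMultiplicity_mul_and_not_dvd P hP s
  set n := rootMultiplicity s P
  have hd : (X - C s) ^ n ∣ R := by
    have : ((X - C s) ^ n) ^ 2 ∣ R ^ 2 := by
      rw [← h, hP']
      exact ⟨Q * P' ^ 2, by ring⟩
    exact (IsIntegrallyClosed.pow_dvd_pow_iff two_ne_zero).1 this
  obtain ⟨R', hR'⟩ := hd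
  have hne : ((X - C s) ^ n) ^ 2 ≠ 0 := pow_ne_zero _ (pow_ne_zero _ (X_sub_C_ne_zero s))
  have h2 : Q * P' ^ 2 = R' ^ 2 := by
    apply mul_left_cancel₀ hne
    rw [hP', hR'] at h
    linear_combination h
  have h3 := congrArg (eval s) h2
  simp only [eval_mul, eval_pow] at h3
  have h4 : eval s P' ≠ 0 := fun h0 => hnd (dvd_iff_isRoot.2 h0)
  apply hQ (eval s R' / eval s P')
  field_simp
  linear_combination -h3

/-- The norm form. -/
noncomputable def N (A B D : F[X]) : F[X] :=
  (Q1 * A ^ 2) ^ 2 + (Q2 * B ^ 2) ^ 2 + (Q3 * D ^ 2) ^ 2 - 2 * (Q1 * A ^ 2) * (Q2 * B ^ 2)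
    - 2 * (Q1 * A ^ 2) * (Q3 * D ^ 2) - 2 * (Q2 * B ^ 2) * (Q3 * D ^ 2)

lemma sq12 (P R : F[X]) (h : Q1 * Q2 * P ^ 2 = R ^ 2) : P = 0 := by
  refine not_sq _ P R 0 ?_ h
  simp only [Q1, Q2, eval_add, eval_mul, eval_pow, eval_X, eval_C]
  decide

lemma sq13 (P R : F[X]) (h : Q1 * Q3 * P ^ 2 = R ^ 2) : P = 0 := by
  refine not_sq _ P R 1 ?_ h
  simp only [Q1, Q3, eval_add, eval_mul, eval_pow, eval_X, eval_C]
  decide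

lemma sq23 (P R : F[X]) (h : Q2 * Q3 * P ^ 2 = R ^ 2) : P = 0 := by
  refine not_sq _ P R 0 ?_ h
  simp only [Q2, Q3, eval_add, eval_mul, eval_pow, eval_X, eval_C]
  decide

lemma Q1_ne : Q1 ≠ 0 := fun h => by
  have := congrArg (eval 0) h
  simp [Q1] at this
  revert this; decide

lemma Q2_ne : Q2 ≠ 0 := fun h => by
  have := congrArg (eval 0) h
  simp [Q2] at this
  revert this; decide

lemma Q3_ne : Q3 ≠ 0 := fun h => by
  have := congrArg (eval 0) h
  simp [Q3] at this
  revert this; decide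

lemma two_ne : (2 : F[X]) ≠ 0 := by
  have : (2 : F[X]) = C 2 := (map_ofNat C 2).symm
  rw [this, Ne, C_eq_zero]; decide

lemma N_zero {A B D : F[X]} (h : N A B D = 0) : A = 0 ∧ B = 0 ∧ D = 0 := by
  unfold N at h
  have h1 : 2 * (A * B) = 0 :=
    sq12 _ (Q1 * A ^ 2 + Q2 * B ^ 2 - Q3 * D ^ 2) (by linear_combination -h)
  have h2 : 2 * (A * D) = 0 :=
    sq13 _ (Q1 * A ^ 2 + Q3 * D ^ 2 - Q2 * B ^ 2) (by linear_combination -h)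
  have h3 : 2 * (B * D) = 0 :=
    sq23 _ (Q2 * B ^ 2 + Q3 * D ^ 2 - Q1 * A ^ 2) (by linear_combination -h)
  simp only [mul_eq_zero, two_ne, false_or] at h1 h2 h3
  have a1 := Q1_ne
  have a2 := Q2_ne
  have a3 := Q3_ne
  rcases h1 with h1 | h1 <;> rcases h2 with h2 | h2 <;> rcases h3 with h3 | h3 <;>
    simp_all

lemma N_deg {A B D : F[X]} {t : ℕ} (ht : 1 ≤ t) (hA : A.natDegree ≤ t - 1)
    (hB : B.natDegree ≤ t - 1) (hD : D.natDegree ≤ t - 1) : (N A B D).natDegree ≤ 4 * t := by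
  have d1 : Q1.natDegree ≤ 2 := by unfold Q1; compute_degree
  have d2 : Q2.natDegree ≤ 2 := by unfold Q2; compute_degree
  have d3 : Q3.natDegree ≤ 2 := by unfold Q3; compute_degree!
  have key : ∀ Q P : F[X], Q.natDegree ≤ 2 → P.natDegree ≤ t - 1 →
      (Q * P ^ 2).natDegree ≤ 2 * t := by
    intro Q P hQ hP
    have e1 := natDegree_mul_le (p := Q) (q := P ^ 2)
    have e2 := natDegree_pow_le (p := P) (n := 2)
    omega
  have p1 := key _ _ d1 hA
  have p2 := key _ _ d2 hB
  have p3 := key _ _ d3 hD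
  have m : ∀ P R : F[X], P.natDegree ≤ 2 * t → R.natDegree ≤ 2 * t →
      (P * R).natDegree ≤ 4 * t := by
    intro P R hP hR
    have := natDegree_mul_le (p := P) (q := R)
    omega
  have m2 : ∀ P R : F[X], P.natDegree ≤ 2 * t → R.natDegree ≤ 2 * t →
      (2 * P * R).natDegree ≤ 4 * t := by
    intro P R hP hR
    have e : (2 * P * R) = C 2 * (P * R) := by
      rw [mul_assoc, map_ofNat C 2]
    rw [e]
    exact (natDegree_C_mul_le _ _).trans (m P R hP hR)
  unfold N
  rw [sq (Q1 * A ^ 2), sq (Q2 * B ^ 2), sq (Q3 * D ^ 2)]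
  have ad : ∀ P R : F[X], P.natDegree ≤ 4 * t → R.natDegree ≤ 4 * t →
      (P + R).natDegree ≤ 4 * t := fun P R hP hR => natDegree_add_le_of_degree_le hP hR
  have sb : ∀ P R : F[X], P.natDegree ≤ 4 * t → R.natDegree ≤ 4 * t →
      (P - R).natDegree ≤ 4 * t := fun P R hP hR =>
    (natDegree_sub_le P R).trans (max_le hP hR)
  exact sb _ _ (sb _ _ (sb _ _ (ad _ _ (ad _ _ (m _ _ p1 p1) (m _ _ p2 p2)) (m _ _ p3 p3))
    (m2 _ _ p1 p2)) (m2 _ _ p1 p3)) (m2 _ _ p2 p3)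

/-- Codeword entry. -/
noncomputable def entry (A B D : F[X]) (j : Fin 15) (k : Fin 4) : F :=
  sg k * xs j * A.eval (S j) + tg k * ys j * B.eval (S j) + zs j * D.eval (S j)

lemma half {a : F} (h : 2 * a = 0) : a = 0 := by
  revert a; decide

lemma fibre (A B D : F[X]) (j : Fin 15) :
    (X - C (S j)) ^ (Finset.univ.filter fun k : Fin 4 => entry A B D j k = 0).card ∣
      N A B D := by
  set d := X - C (S j) with hd
  obtain ⟨a, ha⟩ : ∃ a, a = xs j * A.eval (S j) := ⟨_, rfl⟩
  obtain ⟨b, hb⟩ : ∃ b, b = ys j * B.eval (S j) := ⟨_, rfl⟩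
  obtain ⟨c, hc⟩ : ∃ c, c = zs j * D.eval (S j) := ⟨_, rfl⟩
  have f0 : entry A B D j 0 = a + b + c := by simp [entry, sg, tg, ha, hb, hc]
  have f1 : entry A B D j 1 = -a + b + c := by simp [entry, sg, tg, ha, hb, hc]
  have f2 : entry A B D j 2 = a - b + c := by simp [entry, sg, tg, ha, hb, hc]; ring
  have f3 : entry A B D j 3 = -a - b + c := by simp [entry, sg, tg, ha, hb, hc]; ring
  have eP : (Q1 * A ^ 2).eval (S j) = mu j * a ^ 2 := by
    rw [eval_mul, eval_pow, Q1_eval, ha]; ring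
  have eQ : (Q2 * B ^ 2).eval (S j) = mu j * b ^ 2 := by
    rw [eval_mul, eval_pow, Q2_eval, hb]; ring
  have eR : (Q3 * D ^ 2).eval (S j) = mu j * c ^ 2 := by
    rw [eval_mul, eval_pow, Q3_eval, hc]; ring
  have dA : a = 0 → d ∣ A := fun h => dvd_iff_isRoot.2
    ((mul_eq_zero.1 (ha.symm.trans h)).resolve_left (xs_ne j))
  have dB : b = 0 → d ∣ B := fun h => dvd_iff_isRoot.2
    ((mul_eq_zero.1 (hb.symm.trans h)).resolve_left (ys_ne j))
  have dD : c = 0 → d ∣ D := fun h => dvd_iff_isRoot.2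
    ((mul_eq_zero.1 (hc.symm.trans h)).resolve_left (zs_ne j))
  have H1 : (a + b + c) * (-a + b + c) * (a - b + c) * (-a - b + c) = 0 → d ^ 1 ∣ N A B D := by
    intro h
    rw [pow_one]
    apply dvd_iff_isRoot.2
    have : (N A B D).eval (S j) = mu j ^ 2 *
        ((a + b + c) * (-a + b + c) * (a - b + c) * (-a - b + c)) := by
      unfold N
      simp only [eval_add, eval_sub, eval_mul, eval_pow, eval_ofNat] at eP eQ eR ⊢
      rw [eP, eQ, eR]; ring
    rw [IsRoot, this, h, mul_zero]
  have H4 : a = 0 → b = 0 → c = 0 → d ^ 4 ∣ N A B D := by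
    intro h1 h2 h3
    obtain ⟨A', hA⟩ := dA h1
    obtain ⟨B', hB⟩ := dB h2
    obtain ⟨D', hD⟩ := dD h3
    refine ⟨N A' B' D', ?_⟩
    rw [hA, hB, hD]; unfold N; ring
  have H2a : a = 0 → b ^ 2 = c ^ 2 → d ^ 2 ∣ N A B D := by
    intro h1 h2
    obtain ⟨A', hA⟩ := dA h1
    obtain ⟨E, hE⟩ : d ∣ Q2 * B ^ 2 - Q3 * D ^ 2 := by
      apply dvd_iff_isRoot.2
      rw [IsRoot, eval_sub, eQ, eR, h2, sub_self]
    refine ⟨E ^ 2 + Q1 ^ 2 * d ^ 2 * A' ^ 4 - 2 * Q1 * A' ^ 2 * (Q2 * B ^ 2 + Q3 * D ^ 2), ?_⟩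
    rw [hA]; unfold N
    linear_combination (Q2 * B ^ 2 - Q3 * D ^ 2 + d * E) * hE
  have H2b : b = 0 → a ^ 2 = c ^ 2 → d ^ 2 ∣ N A B D := by
    intro h1 h2
    obtain ⟨A', hA⟩ := dB h1
    obtain ⟨E, hE⟩ : d ∣ Q1 * A ^ 2 - Q3 * D ^ 2 := by
      apply dvd_iff_isRoot.2
      rw [IsRoot, eval_sub, eP, eR, h2, sub_self]
    refine ⟨E ^ 2 + Q2 ^ 2 * d ^ 2 * A' ^ 4 - 2 * Q2 * A' ^ 2 * (Q1 * A ^ 2 + Q3 * D ^ 2), ?_⟩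
    rw [hA]; unfold N
    linear_combination (Q1 * A ^ 2 - Q3 * D ^ 2 + d * E) * hE
  have H2c : c = 0 → a ^ 2 = b ^ 2 → d ^ 2 ∣ N A B D := by
    intro h1 h2
    obtain ⟨A', hA⟩ := dD h1
    obtain ⟨E, hE⟩ : d ∣ Q1 * A ^ 2 - Q2 * B ^ 2 := by
      apply dvd_iff_isRoot.2
      rw [IsRoot, eval_sub, eP, eQ, h2, sub_self]
    refine ⟨E ^ 2 + Q3 ^ 2 * d ^ 2 * A' ^ 4 - 2 * Q3 * A' ^ 2 * (Q1 * A ^ 2 + Q2 * B ^ 2), ?_⟩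
    rw [hA]; unfold N
    linear_combination (Q1 * A ^ 2 - Q2 * B ^ 2 + d * E) * hE
  -- consequences of two vanishing entries
  have g01 : a + b + c = 0 → -a + b + c = 0 → a = 0 ∧ b ^ 2 = c ^ 2 := fun h h' => by
    have : a = 0 := half (by linear_combination h - h')
    exact ⟨this, by subst this; linear_combination (b - c) * h⟩
  have g02 : a + b + c = 0 → a - b + c = 0 → b = 0 ∧ a ^ 2 = c ^ 2 := fun h h' => by
    have : b = 0 := half (by linear_combination h - h')
    exact ⟨this, by subst this; linear_combination (a - c) * h⟩
  have g03 : a + b + c = 0 → -a - b + c = 0 → c = 0 ∧ a ^ 2 = b ^ 2 := fun h h' => by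
    have : c = 0 := half (by linear_combination h + h')
    exact ⟨this, by subst this; linear_combination (a - b) * h⟩
  have g12 : -a + b + c = 0 → a - b + c = 0 → c = 0 ∧ a ^ 2 = b ^ 2 := fun h h' => by
    have : c = 0 := half (by linear_combination h + h')
    exact ⟨this, by subst this; linear_combination (-a - b) * h⟩
  have g13 : -a + b + c = 0 → -a - b + c = 0 → b = 0 ∧ a ^ 2 = c ^ 2 := fun h h' => by
    have : b = 0 := half (by linear_combination h - h')
    exact ⟨this, by subst this; linear_combination (-a - c) * h⟩
  have g23 : a - b + c = 0 → -a - b + c = 0 → a = 0 ∧ b ^ 2 = c ^ 2 := fun h h' => by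
    have : a = 0 := half (by linear_combination h - h')
    exact ⟨this, by subst this; linear_combination (-b - c) * h⟩
  have H4' : a = 0 → b = 0 → c = 0 → ∀ n ≤ 4, d ^ n ∣ N A B D := fun h1 h2 h3 n hn =>
    (pow_dvd_pow d hn).trans (H4 h1 h2 h3)
  rw [Finset.card_filter, Fin.sum_univ_four, f0, f1, f2, f3]
  by_cases z0 : a + b + c = 0 <;> by_cases z1 : -a + b + c = 0 <;>
    by_cases z2 : a - b + c = 0 <;> by_cases z3 : -a - b + c = 0 <;>
    simp only [z0, z1, z2, z3, if_true, if_false, Nat.reduceAdd, pow_zero, one_dvd]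
  · exact H4' (g01 z0 z1).1 (g02 z0 z2).1 (g03 z0 z3).1 _ (by norm_num)
  · exact H4' (g01 z0 z1).1 (g02 z0 z2).1 (g12 z1 z2).1 _ (by norm_num)
  · exact H4' (g01 z0 z1).1 (g13 z1 z3).1 (g03 z0 z3).1 _ (by norm_num)
  · exact H2a (g01 z0 z1).1 (g01 z0 z1).2
  · exact H4' (g23 z2 z3).1 (g02 z0 z2).1 (g03 z0 z3).1 _ (by norm_num)
  · exact H2b (g02 z0 z2).1 (g02 z0 z2).2
  · exact H2c (g03 z0 z3).1 (g03 z0 z3).2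
  · exact H1 (by rw [z0]; ring)
  · exact H4' (g23 z2 z3).1 (g13 z1 z3).1 (g12 z1 z2).1 _ (by norm_num)
  · exact H2c (g12 z1 z2).1 (g12 z1 z2).2
  · exact H2b (g13 z1 z3).1 (g13 z1 z3).2
  · exact H1 (by rw [z1]; ring)
  · exact H2a (g23 z2 z3).1 (g23 z2 z3).2
  · exact H1 (by rw [z2]; ring)
  · exact H1 (by rw [z3]; ring)

/-- Number of zeros of a codeword. -/
lemma zeros_le (A B D : F[X]) (hN : N A B D ≠ 0) :
    ∑ j : Fin 15, (Finset.univ.filter fun k : Fin 4 => entry A B D j k = 0).card ≤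
      (N A B D).natDegree := by
  calc _ ≤ ∑ j : Fin 15, (N A B D).roots.count (S j) := by
        refine Finset.sum_le_sum fun j _ => ?_
        rw [count_roots]
        exact (le_rootMultiplicity_iff hN).2 (fibre A B D j)
    _ = ∑ s ∈ Finset.univ.image S, (N A B D).roots.count s := by
        rw [Finset.sum_image fun x _ y _ h => S_inj h]
    _ ≤ ∑ s : F, (N A B D).roots.count s :=
        Finset.sum_le_sum_of_subset (Finset.subset_univ _)
    _ = (N A B D).roots.card := Multiset.sum_count_eq_card fun s _ => Finset.mem_univ s
    _ ≤ _ := card_roots' _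

lemma all_zero {A B D : F[X]} {t : ℕ} (ht : t ≤ 15) (hA : A ∈ degreeLT F t)
    (hB : B ∈ degreeLT F t) (hD : D ∈ degreeLT F t) (h : ∀ j k, entry A B D j k = 0) :
    A = 0 ∧ B = 0 ∧ D = 0 := by
  have key : ∀ P : F[X], P ∈ degreeLT F t → (∀ j, P.eval (S j) = 0) → P = 0 := by
    intro P hP h0
    refine eq_zero_of_degree_lt_of_eval_finset_eq_zero (Finset.univ.image S) ?_ ?_
    · rw [Finset.card_image_of_injective _ S_inj]
      refine (mem_degreeLT.1 hP).trans_le ?_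
      simpa using ht
    · intro x hx
      obtain ⟨j, -, rfl⟩ := Finset.mem_image.1 hx
      exact h0 j
  have e : ∀ j, A.eval (S j) = 0 ∧ B.eval (S j) = 0 ∧ D.eval (S j) = 0 := by
    intro j
    have h0 := h j 0
    have h1 := h j 1
    have h2 := h j 2
    have h3 := h j 3
    simp [entry, sg, tg] at h0 h1 h2 h3
    have ea : xs j * A.eval (S j) = 0 := half (by linear_combination h0 - h1)
    have eb : ys j * B.eval (S j) = 0 := half (by linear_combination h0 - h2)
    have ec : zs j * D.eval (S j) = 0 := half (by linear_combination h0 + h3)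
    exact ⟨(mul_eq_zero.1 ea).resolve_left (xs_ne j), (mul_eq_zero.1 eb).resolve_left (ys_ne j),
      (mul_eq_zero.1 ec).resolve_left (zs_ne j)⟩
  exact ⟨key A hA fun j => (e j).1, key B hB fun j => (e j).2.1, key D hD fun j => (e j).2.2⟩

/-- Coordinates are pairs (point of the line, pair of signs). -/
def ix : Fin 60 ≃ Fin 15 × Fin 4 := (finProdFinEquiv (m := 15) (n := 4)).symm

/-- The encoder. -/
noncomputable def enc (t : ℕ) :
    (degreeLT F t × degreeLT F t × degreeLT F t) →ₗ[F] (Fin 60 → F) where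
  toFun v i := entry v.1 v.2.1 v.2.2 (ix i).1 (ix i).2
  map_add' v w := by
    funext i
    simp [entry]; ring
  map_smul' r v := by
    funext i
    simp [entry]; ring

lemma enc_inj {t : ℕ} (ht : t ≤ 15) : Function.Injective (enc t) := by
  rw [← LinearMap.ker_eq_bot, LinearMap.ker_eq_bot']
  rintro ⟨⟨A, hA⟩, ⟨B, hB⟩, ⟨D, hD⟩⟩ h
  have := all_zero ht hA hB hD (fun j k => by
    have := congrFun h (ix.symm (j, k))
    simpa [enc] using this)
  obtain ⟨rfl, rfl, rfl⟩ := this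
  rfl

lemma relation (A B D : F[X]) (j : Fin 15) :
    entry A B D j 0 - entry A B D j 1 - entry A B D j 2 + entry A B D j 3 = 0 := by
  simp [entry, sg, tg]; ring

end LRC31

open LRC31 Polynomial in
theorem exists_LRC_F31_length60 :
    ∀ t : ℕ, 1 ≤ t → t ≤ 15 →
      ∃ C : Submodule (ZMod 31) (Fin 60 → ZMod 31),
        Module.finrank (ZMod 31) C = 3 * t ∧
        (∀ x : Fin 60 → ZMod 31, x ∈ C → x ≠ 0 →
          60 - 4 * t ≤ Nat.card {i : Fin 60 // x i ≠ 0}) ∧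
        (∀ i : Fin 60, ∃ I : Finset (Fin 60), i ∉ I ∧ I.card ≤ 3 ∧
          ∀ x ∈ C, ∀ y ∈ C, (∀ j ∈ I, x j = y j) → x i = y i) := by
  have := fact31
  intro t ht1 ht
  refine ⟨LinearMap.range (enc t), ?_, ?_, ?_⟩
  · rw [LinearMap.finrank_range_of_inj (enc_inj ht)]
    have e := ((degreeLTEquiv F t).prodCongr
      ((degreeLTEquiv F t).prodCongr (degreeLTEquiv F t))).finrank_eq
    rw [e]
    simp
    ring
  · rintro x ⟨⟨⟨A, hA⟩, ⟨B, hB⟩, ⟨D, hD⟩⟩, rfl⟩ hx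
    have hN : N A B D ≠ 0 := by
      intro h0
      obtain ⟨rfl, rfl, rfl⟩ := N_zero h0
      exact hx (map_zero (enc t))
    have nd : ∀ P ∈ degreeLT F t, P.natDegree ≤ t - 1 := by
      intro P hP
      rw [mem_degreeLT] at hP
      by_cases h0 : P = 0
      · simp [h0]
      · have := (natDegree_lt_iff_degree_lt h0).2 hP
        omega
    have h1 := zeros_le A B D hN
    have h2 := N_deg ht1 (nd A hA) (nd B hB) (nd D hD)
    set x := enc t (⟨A, hA⟩, ⟨B, hB⟩, ⟨D, hD⟩) with hxd
    have hz : (Finset.univ.filter fun i => x i = 0).card =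
        ∑ j : Fin 15, (Finset.univ.filter fun k : Fin 4 => entry A B D j k = 0).card := by
      simp only [Finset.card_filter]
      rw [← Fintype.sum_prod_type' (fun j k => if entry A B D j k = 0 then 1 else 0)]
      exact Equiv.sum_comp ix (fun p => if entry A B D p.1 p.2 = 0 then 1 else 0)
    have hs := Finset.card_filter_add_card_filter_not (s := (Finset.univ : Finset (Fin 60)))
      (fun i => x i = 0)
    rw [Nat.card_eq_fintype_card, Fintype.card_subtype]
    simp only [Finset.card_univ, Fintype.card_fin] at hs
    simp only [ne_eq]
    omega
  · intro i
    obtain ⟨⟨j, k⟩, hjk⟩ : ∃ p, p = ix i := ⟨_, rfl⟩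
    have hi : i = ix.symm (j, k) := by rw [hjk]; simp
    refine ⟨(Finset.univ.erase k).image fun l => ix.symm (j, l), ?_, ?_, ?_⟩
    · simp [hi]
    · refine Finset.card_image_le.trans ?_
      simp
    · rintro _ ⟨v, rfl⟩ _ ⟨w, rfl⟩ h
      have h' : ∀ l, l ≠ k → entry v.1 v.2.1 v.2.2 j l = entry w.1 w.2.1 w.2.2 j l := by
        intro l hl
        have := h (ix.symm (j, l)) (Finset.mem_image.2 ⟨l, by simp [hl], rfl⟩)
        simpa [enc] using this
      have r1 := relation v.1 v.2.1 v.2.2 j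
      have r2 := relation w.1 w.2.1 w.2.2 j
      have goal : entry v.1 v.2.1 v.2.2 j k = entry w.1 w.2.1 w.2.2 j k := by
        fin_cases k
        · have a := h' 1 (by decide)
          have b := h' 2 (by decide)
          have c := h' 3 (by decide)
          show entry _ _ _ j 0 = entry _ _ _ j 0
          linear_combination r1 - r2 + a + b - c
        · have a := h' 0 (by decide)
          have b := h' 2 (by decide)
          have c := h' 3 (by decide)
          show entry _ _ _ j 1 = entry _ _ _ j 1
          linear_combination -r1 + r2 + a - b + c
        · have a := h' 0 (by decide)
          have b := h' 1 (by decide)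
          have c := h' 3 (by decide)
          show entry _ _ _ j 2 = entry _ _ _ j 2
          linear_combination -r1 + r2 + a - b + c
        · have a := h' 0 (by decide)
          have b := h' 1 (by decide)
          have c := h' 2 (by decide)
          show entry _ _ _ j 3 = entry _ _ _ j 3
          linear_combination r1 - r2 - a + b + c
      rw [hi]
      simpa [enc] using goal
end

section
/- For every integer t with 1 ≤ t ≤ 16 there exists a linear code over the field with 32 elements of length 64, dimension 3t, minimum distance at least 64 − 4t, and locality 3. In particular (t = 14), there exists a linear code over the field with 32 elements of length 64, dimension 42, minimum distance at least 8, and locality 3. -/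
open Polynomial

def Nm {R : Type*} [CommRing R] (q q1 q2 f0 f1 f2 : R) : R :=
  q ^ 2 * (f0 * (f0 + f1) * (f0 + f2) * (f0 + f1 + f2)) + f1 ^ 4 * q1 ^ 2
    + q * (f1 ^ 2 * f2 * (f1 + f2) * q1) + f2 ^ 4 * q2 ^ 2 + q * (f2 ^ 2 * f1 * (f1 + f2) * q2)

theorem Nm_shift {R : Type*} [CommRing R] [CharP R 2] (q q1 q2 f0 f1 f2 x y : R) :
    Nm q q1 q2 f0 f1 f2 =
      Nm q (q1 - (x ^ 2 + x) * q) (q2 - (y ^ 2 + y) * q) (f0 + f1 * x + f2 * y) f1 f2 := by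
  unfold Nm
  grind

theorem Nm_eq {R : Type*} [CommRing R] [CharP R 2] (q q1 q2 f0 f1 f2 : R) :
    Nm q q1 q2 f0 f1 f2 =
      (q * (f0 ^ 2 + f0 * f2) + f1 ^ 2 * q1 + f2 ^ 2 * q2) ^ 2
      + (q * (f0 ^ 2 + f0 * f2) + f1 ^ 2 * q1 + f2 ^ 2 * q2) * (q * (f1 ^ 2 + f1 * f2))
      - (f1 ^ 2 + f1 * f2) ^ 2 * q * q1 := by
  unfold Nm
  grind

theorem AS {F : Type*} [Field F] (q w : F[X]) (hq : Prime q) (hw : ¬ q ∣ w) :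
    ∀ (n : ℕ) (a b : F[X]), b.natDegree ≤ n → (a ^ 2 + a * b) * q = w * b ^ 2 → b = 0 := by
  intro n
  induction n with
  | zero =>
    intro a b hb h
    have h1 : q ∣ b := by
      have : q ∣ w * b ^ 2 := ⟨_, by rw [← h, mul_comm]⟩
      exact hq.dvd_of_dvd_pow ((hq.dvd_or_dvd this).resolve_left hw)
    by_contra hb0
    have h2 := natDegree_le_of_dvd h1 hb0
    have h3 : q.natDegree ≠ 0 := fun h0 => hq.not_isUnit
      (isUnit_iff_degree_eq_zero.2 (by rw [degree_eq_natDegree hq.ne_zero, h0]; rfl))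
    omega
  | succ n ih =>
    intro a b hb h
    have h1 : q ∣ b := by
      have : q ∣ w * b ^ 2 := ⟨_, by rw [← h, mul_comm]⟩
      exact hq.dvd_of_dvd_pow ((hq.dvd_or_dvd this).resolve_left hw)
    obtain ⟨c, rfl⟩ := h1
    have h4 : q ∣ a := by
      have h5 : a ^ 2 = q * (w * c ^ 2 - a * c) := by
        apply mul_right_cancel₀ hq.ne_zero
        linear_combination h
      exact hq.dvd_of_dvd_pow ⟨_, h5⟩
    obtain ⟨a, rfl⟩ := h4
    by_contra hb0
    have hc : c ≠ 0 := fun h => hb0 (by rw [h, mul_zero])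
    have h3 : q.natDegree ≠ 0 := fun h0 => hq.not_isUnit
      (isUnit_iff_degree_eq_zero.2 (by rw [degree_eq_natDegree hq.ne_zero, h0]; rfl))
    rw [natDegree_mul hq.ne_zero hc] at hb
    apply hc
    apply ih a c (by omega)
    apply mul_left_cancel₀ (pow_ne_zero 2 hq.ne_zero)
    linear_combination h

theorem Nm_ne {F : Type*} [Field F] [CharP F 2] (q q1 q2 f0 f1 f2 : F[X]) (hq : Prime q)
    (h1 : ¬ q ∣ q1) (h2 : ¬ q ∣ q2) (h3 : ¬ q ∣ q1 + q2)
    (h : Nm q q1 q2 f0 f1 f2 = 0) : f0 = 0 ∧ f1 = 0 ∧ f2 = 0 := by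
  have hAS := fun w hw a b => AS q w hq hw _ a b le_rfl
  have hN := Nm_eq q q1 q2 f0 f1 f2
  rw [h] at hN
  have hf : q * (f1 ^ 2 + f1 * f2) = 0 := by
    apply hAS q1 h1 (q * (f0 ^ 2 + f0 * f2) + f1 ^ 2 * q1 + f2 ^ 2 * q2)
    linear_combination - q * hN
  have hD : f1 ^ 2 + f1 * f2 = 0 := (mul_eq_zero.1 hf).resolve_left hq.ne_zero
  rw [hD] at hN
  have hA : q * (f0 ^ 2 + f0 * f2) + f1 ^ 2 * q1 + f2 ^ 2 * q2 = 0 := by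
    apply pow_eq_zero_iff (two_ne_zero) |>.1
    linear_combination - hN
  have hf2 : f2 = 0 := by
    have : f1 * (f1 + f2) = 0 := by linear_combination hD
    rcases mul_eq_zero.1 this with h0 | h0
    · subst h0
      apply hAS q2 h2 f0
      grind
    · have : f1 = f2 := by grind
      subst this
      apply hAS _ h3 f0
      grind
  subst hf2
  have hf1 : f1 = 0 := by
    apply pow_eq_zero_iff (two_ne_zero) |>.1
    linear_combination hD
  subst hf1
  refine ⟨?_, rfl, rfl⟩
  have : q * f0 ^ 2 = 0 := by linear_combination hA
  exact pow_eq_zero_iff (two_ne_zero) |>.1 ((mul_eq_zero.1 this).resolve_left hq.ne_zero)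

theorem core1 {R : Type*} [CommRing R] (p q U V g f1 f2 : R) (hU : p ∣ U) (hV : p ∣ V)
    (hg : p ∣ g) : p ∣ Nm q U V g f1 f2 := by
  obtain ⟨U, rfl⟩ := hU
  obtain ⟨V, rfl⟩ := hV
  obtain ⟨g, rfl⟩ := hg
  unfold Nm
  refine ⟨q ^ 2 * (g * (p * g + f1) * (p * g + f2) * (p * g + f1 + f2)) + f1 ^ 4 * p * U ^ 2
    + q * (f1 ^ 2 * f2 * (f1 + f2) * U) + f2 ^ 4 * p * V ^ 2
    + q * (f2 ^ 2 * f1 * (f1 + f2) * V), by ring⟩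

theorem core2 {R : Type*} [CommRing R] (p q U V g f1 f2 : R) (hU : p ∣ U) (hV : p ∣ V)
    (hg : p ∣ g) (hf : p ∣ f1 ∨ p ∣ f2 ∨ p ∣ f1 + f2) : p ^ 2 ∣ Nm q U V g f1 f2 := by
  obtain ⟨U, rfl⟩ := hU
  obtain ⟨V, rfl⟩ := hV
  have h1 : p ∣ f1 * f2 * (f1 + f2) := by
    rcases hf with h | h | h
    · exact (h.mul_right _).mul_right _
    · exact (h.mul_left _).mul_right _
    · exact h.mul_left _
  have h2 : p ∣ (g + f1) * (g + f2) * (g + f1 + f2) := by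
    rcases hf with h | h | h
    · exact ((dvd_add hg h).mul_right _).mul_right _
    · exact ((dvd_add hg h).mul_left _).mul_right _
    · exact (add_assoc g f1 f2 ▸ dvd_add hg h).mul_left _
  obtain ⟨g, rfl⟩ := hg
  obtain ⟨a, ha⟩ := h1
  obtain ⟨b, hb⟩ := h2
  refine ⟨q ^ 2 * (g * b) + f1 ^ 4 * U ^ 2 + q * f1 * a * U + f2 ^ 4 * V ^ 2 + q * f2 * a * V, ?_⟩
  unfold Nm
  linear_combination q ^ 2 * p * g * hb + q * f1 * p * U * ha + q * f2 * p * V * ha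

theorem core4 {R : Type*} [CommRing R] (p q U V g f1 f2 : R)
    (hg : p ∣ g) (h1 : p ∣ f1) (h2 : p ∣ f2) : p ^ 4 ∣ Nm q U V g f1 f2 := by
  obtain ⟨g, rfl⟩ := hg
  obtain ⟨f1, rfl⟩ := h1
  obtain ⟨f2, rfl⟩ := h2
  refine ⟨Nm q U V g f1 f2, ?_⟩
  unfold Nm
  ring

open Classical in
theorem core5 {R : Type*} [CommRing R] (p q U V g f1 f2 : R) (hU : p ∣ U) (hV : p ∣ V)
    (hg : p ∣ g) :
    p ^ (1 + (if p ∣ g + f1 then 1 else 0) + (if p ∣ g + f2 then 1 else 0)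
      + (if p ∣ g + f1 + f2 then 1 else 0)) ∣ Nm q U V g f1 f2 := by
  rw [add_assoc g f1 f2]
  simp only [dvd_add_right hg]
  by_cases h1 : p ∣ f1
  · by_cases h2 : p ∣ f2
    · simpa [h1, h2, dvd_add h1 h2] using core4 p q U V g f1 f2 hg h1 h2
    · simpa [h1, h2, dvd_add_right h1] using core2 p q U V g f1 f2 hU hV hg (Or.inl h1)
  · by_cases h2 : p ∣ f2
    · simpa [h1, h2, dvd_add_left h2] using core2 p q U V g f1 f2 hU hV hg (Or.inr (Or.inl h2))
    · by_cases h3 : p ∣ f1 + f2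
      · simpa [h1, h2, h3] using core2 p q U V g f1 f2 hU hV hg (Or.inr (Or.inr h3))
      · simpa [h1, h2, h3] using core1 p q U V g f1 f2 hU hV hg

open Classical in
theorem core6 {R : Type*} [CommRing R] [CharP R 2] (p q U V g f1 f2 : R) (hU : p ∣ U)
    (hV : p ∣ V) :
    p ^ ((if p ∣ g then 1 else 0) + (if p ∣ g + f1 then 1 else 0) + (if p ∣ g + f2 then 1 else 0)
      + (if p ∣ g + f1 + f2 then 1 else 0)) ∣ Nm q U V g f1 f2 := by
  by_cases h0 : p ∣ g
  · simpa [h0] using core5 p q U V g f1 f2 hU hV h0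
  by_cases h1 : p ∣ g + f1
  · have := core5 p q U V _ f1 f2 hU hV h1
    rw [show g + f1 + f1 = g by grind] at this
    rw [show Nm q U V g f1 f2 = Nm q U V (g + f1) f1 f2 by unfold Nm; grind]
    refine (pow_dvd_pow _ (le_of_eq ?_)).trans this
    simp [h0, h1]; ring
  by_cases h2 : p ∣ g + f2
  · have := core5 p q U V _ f1 f2 hU hV h2
    rw [show g + f2 + f2 = g by grind, show g + f2 + f1 = g + f1 + f2 by ring,
      show g + f1 + f2 + f2 = g + f1 by grind] at this
    rw [show Nm q U V g f1 f2 = Nm q U V (g + f2) f1 f2 by unfold Nm; grind]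
    refine (pow_dvd_pow _ (le_of_eq ?_)).trans this
    simp [h0, h1, h2]
  by_cases h3 : p ∣ g + f1 + f2
  · simpa [h0, h1, h2, h3] using (show Nm q U V g f1 f2 = Nm q U V (g + f1 + f2) f1 f2 by
      unfold Nm; grind) ▸ core1 p q U V _ f1 f2 hU hV h3
  · simp [h0, h1, h2, h3]

theorem Nm_deg {F : Type*} [Field F] (q q1 q2 f0 f1 f2 : F[X]) (d : ℕ)
    (hq : q.natDegree ≤ 2) (h1 : q1.natDegree ≤ 2) (h2 : q2.natDegree ≤ 2)
    (hf0 : f0.natDegree ≤ d) (hf1 : f1.natDegree ≤ d) (hf2 : f2.natDegree ≤ d) :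
    (Nm q q1 q2 f0 f1 f2).natDegree ≤ 4 * d + 4 := by
  have a : ∀ {f g : F[X]} {n : ℕ}, f.natDegree ≤ n → g.natDegree ≤ n → (f + g).natDegree ≤ n :=
    fun h h' => natDegree_add_le_of_degree_le h h'
  have m : ∀ {f g : F[X]} {n k : ℕ}, f.natDegree ≤ n → g.natDegree ≤ k →
    (f * g).natDegree ≤ n + k := fun h h' => natDegree_mul_le_of_le h h'
  have p : ∀ {f : F[X]} {n : ℕ} (k : ℕ), f.natDegree ≤ n → (f ^ k).natDegree ≤ k * n :=
    fun k h => natDegree_pow_le_of_le k h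
  unfold Nm
  refine a (a (a (a ?_ ?_) ?_) ?_) ?_
  · exact (m (p 2 hq) (m (m (m hf0 (a hf0 hf1)) (a hf0 hf2)) (a (a hf0 hf1) hf2))).trans (by omega)
  · exact (m (p 4 hf1) (p 2 h1)).trans (by omega)
  · exact (m hq (m (m (m (p 2 hf1) hf2) (a hf1 hf2)) h1)).trans (by omega)
  · exact (m (p 4 hf2) (p 2 h2)).trans (by omega)
  · exact (m hq (m (m (m (p 2 hf2) hf1) (a hf1 hf2)) h2)).trans (by omega)

def Pt {F : Type*} [Field F] (α s : F) : Prop :=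
  ∃ x y : F, (x ^ 2 + x) * (s ^ 2 + s + 1) = s ^ 2 + α * s + (α ^ 2 + 1) ∧
    (y ^ 2 + y) * (s ^ 2 + s + 1) = (α ^ 2 + 1) * s + (α ^ 4 + α ^ 3)

theorem pt_0 {F : Type*} [Field F] (α : F) (h : α ^ 5 + α ^ 2 + 1 = 0) (h2 : (2 : F) = 0) :
    Pt α (α ^ 0) := by
  have e : α ^ 0 = 1 := by
    linear_combination (0) * h + (0) * h2
  rw [e]
  refine ⟨α, α^4, ?_, ?_⟩
  · linear_combination (0) * h + (-1 + α + α^2) * h2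
  · linear_combination (-3 + (3)*α^3) * h + (1 + α^2 + (-2)*α^3 + α^4) * h2

theorem pt_1 {F : Type*} [Field F] (α : F) (h : α ^ 5 + α ^ 2 + 1 = 0) (h2 : (2 : F) = 0) :
    Pt α (α ^ 1) := by
  have e : α ^ 1 = α := by
    linear_combination (0) * h + (0) * h2
  rw [e]
  refine ⟨α + α^3 + α^4, α, ?_, ?_⟩
  · linear_combination (1 + (3)*α + (4)*α^2 + (4)*α^3 + (3)*α^4 + α^5) * h + (-1 + (-1)*α + (-3)*α^2 + (-2)*α^3 + (-1)*α^4) * h2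
  · linear_combination (0) * h + (α^2) * h2

theorem pt_2 {F : Type*} [Field F] (α : F) (h : α ^ 5 + α ^ 2 + 1 = 0) (h2 : (2 : F) = 0) :
    Pt α (α ^ 2) := by
  have e : α ^ 2 = α^2 := by
    linear_combination (0) * h + (0) * h2
  rw [e]
  refine ⟨α + α^2 + α^4, α^2 + α^4, ?_, ?_⟩
  · linear_combination (-3 + (5)*α + (5)*α^3 + α^4 + (3)*α^5 + α^7) * h + (1 + (-2)*α + (2)*α^2 + (-4)*α^3 + α^4) * h2
  · linear_combination (-8 + (6)*α + (-4)*α^2 + (5)*α^3 + (-1)*α^4 + (3)*α^5 + α^7) * h + (4 + (-3)*α + (6)*α^2 + (-6)*α^3 + (3)*α^4) * h2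

theorem pt_3 {F : Type*} [Field F] (α : F) (h : α ^ 5 + α ^ 2 + 1 = 0) (h2 : (2 : F) = 0) :
    Pt α (α ^ 3) := by
  have e : α ^ 3 = α^3 := by
    linear_combination (0) * h + (0) * h2
  rw [e]
  refine ⟨α^2 + α^3, α + α^2 + α^3, ?_, ?_⟩
  · linear_combination (1 + (-2)*α + (-1)*α^2 + α^3 + α^4 + α^5 + (2)*α^6 + α^7) * h + (-1 + α + α^3) * h2
  · linear_combination (-2 + (-1)*α + (2)*α^3 + (3)*α^4 + (3)*α^5 + (2)*α^6 + α^7) * h + (1 + α + (2)*α^2) * h2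

theorem pt_5 {F : Type*} [Field F] (α : F) (h : α ^ 5 + α ^ 2 + 1 = 0) (h2 : (2 : F) = 0) :
    Pt α (α ^ 5) := by
  have e : α ^ 5 = 1 + α^2 := by
    linear_combination (1) * h + (-1 + (-1)*α^2) * h2
  rw [e]
  refine ⟨α + α^3, α^2, ?_, ?_⟩
  · linear_combination (-2 + (10)*α + (5)*α^3 + α^5) * h + ((-4)*α + α^2 + (-5)*α^3 + (4)*α^4) * h2
  · linear_combination (-1 + (4)*α + α^3) * h + ((-2)*α + α^2 + (-3)*α^3 + (2)*α^4) * h2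

theorem pt_7 {F : Type*} [Field F] (α : F) (h : α ^ 5 + α ^ 2 + 1 = 0) (h2 : (2 : F) = 0) :
    Pt α (α ^ 7) := by
  have e : α ^ 7 = α^2 + α^4 := by
    linear_combination (α^2) * h + ((-1)*α^2 + (-1)*α^4) * h2
  rw [e]
  refine ⟨α, α + α^3 + α^4, ?_, ?_⟩
  · linear_combination (-1 + (-1)*α + α^2 + α^3 + α^4 + α^5) * h + (α + (-1)*α^4) * h2
  · linear_combination (2 + (-1)*α + α^4 + (3)*α^5 + (5)*α^6 + (5)*α^7 + (5)*α^8 + (3)*α^9 + (2)*α^10 + α^11) * h + (-1 + α + (-1)*α^2 + α^3) * h2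

theorem pt_8 {F : Type*} [Field F] (α : F) (h : α ^ 5 + α ^ 2 + 1 = 0) (h2 : (2 : F) = 0) :
    Pt α (α ^ 8) := by
  have e : α ^ 8 = 1 + α^2 + α^3 := by
    linear_combination (-1 + α^3) * h + ((-1)*α^3) * h2
  rw [e]
  refine ⟨α^2, α^2, ?_, ?_⟩
  · linear_combination (-2 + α + (4)*α^2 + (2)*α^3 + (2)*α^4 + α^5) * h + ((-1)*α + (-1)*α^2 + (-3)*α^3 + (-1)*α^4) * h2
  · linear_combination (-1 + (2)*α + (4)*α^2 + (2)*α^3 + (2)*α^4 + α^5) * h + ((-1)*α + (-1)*α^2 + (-3)*α^3 + (-1)*α^4) * h2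

theorem pt_10 {F : Type*} [Field F] (α : F) (h : α ^ 5 + α ^ 2 + 1 = 0) (h2 : (2 : F) = 0) :
    Pt α (α ^ 10) := by
  have e : α ^ 10 = 1 + α^4 := by
    linear_combination (-1 + (-1)*α^2 + α^5) * h + (α^2) * h2
  rw [e]
  refine ⟨α + α^2, α^2 + α^4, ?_, ?_⟩
  · linear_combination ((4)*α + (3)*α^2 + (2)*α^5 + (2)*α^6 + α^7) * h + (-1 + (-1)*α + α^2 + α^3 + (-1)*α^4) * h2
  · linear_combination (-21 + (18)*α + (-13)*α^2 + (13)*α^3 + (-7)*α^4 + (8)*α^5 + (-3)*α^6 + (5)*α^7 + (-1)*α^8 + (2)*α^9 + α^11) * h + (10 + (-9)*α + (18)*α^2 + (-16)*α^3 + (12)*α^4) * h2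

theorem pt_11 {F : Type*} [Field F] (α : F) (h : α ^ 5 + α ^ 2 + 1 = 0) (h2 : (2 : F) = 0) :
    Pt α (α ^ 11) := by
  have e : α ^ 11 = 1 + α + α^2 := by
    linear_combination (1 + (-1)*α + (-1)*α^3 + α^6) * h + (-1 + (-1)*α^2 + α^3) * h2
  rw [e]
  refine ⟨α^2, α^3, ?_, ?_⟩
  · linear_combination (4 + (5)*α + (2)*α^2 + α^3) * h + (-3 + (-4)*α + (-4)*α^2 + (-3)*α^3 + (2)*α^4) * h2
  · linear_combination (-1 + (3)*α + (3)*α^2 + (4)*α^3 + (2)*α^4 + α^5) * h + ((-2)*α + (-2)*α^2 + (-3)*α^3 + (-2)*α^4) * h2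

theorem pt_18 {F : Type*} [Field F] (α : F) (h : α ^ 5 + α ^ 2 + 1 = 0) (h2 : (2 : F) = 0) :
    Pt α (α ^ 18) := by
  have e : α ^ 18 = 1 + α := by
    linear_combination (-3 + α + (-3)*α^2 + α^3 + (-1)*α^4 + (2)*α^5 + α^7 + (-1)*α^8 + (-1)*α^10 + α^13) * h + (1 + (-1)*α + (3)*α^2 + (-1)*α^3 + (2)*α^4) * h2
  rw [e]
  refine ⟨α + α^2 + α^3 + α^4, α^3 + α^4, ?_, ?_⟩
  · linear_combination (14 + (20)*α + (18)*α^2 + (12)*α^3 + (5)*α^4 + α^5) * h + (-8 + (-10)*α + (-13)*α^2 + (-8)*α^3) * h2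
  · linear_combination (-7 + (-1)*α + (8)*α^2 + (10)*α^3 + (5)*α^4 + α^5) * h + (3 + (-1)*α^2 + (-4)*α^3 + (-4)*α^4) * h2

theorem pt_19 {F : Type*} [Field F] (α : F) (h : α ^ 5 + α ^ 2 + 1 = 0) (h2 : (2 : F) = 0) :
    Pt α (α ^ 19) := by
  have e : α ^ 19 = α + α^2 := by
    linear_combination (4 + (-3)*α + α^2 + (-3)*α^3 + α^4 + (-1)*α^5 + (2)*α^6 + α^8 + (-1)*α^9 + (-1)*α^11 + α^14) * h + (-2 + α + (-3)*α^2 + (3)*α^3 + (-1)*α^4) * h2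
  rw [e]
  refine ⟨α^2 + α^3, α + α^3, ?_, ?_⟩
  · linear_combination (-1 + (4)*α + (7)*α^2 + (7)*α^3 + (4)*α^4 + α^5) * h + ((-2)*α + (-4)*α^2 + (-6)*α^3 + (-4)*α^4) * h2
  · linear_combination (2 + (6)*α + (5)*α^2 + (4)*α^3 + (2)*α^4 + α^5) * h + (-1 + (-3)*α + (-3)*α^2 + (-4)*α^3 + (-1)*α^4) * h2

theorem pt_21 {F : Type*} [Field F] (α : F) (h : α ^ 5 + α ^ 2 + 1 = 0) (h2 : (2 : F) = 0) :
    Pt α (α ^ 21) := by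
  have e : α ^ 21 = α^3 + α^4 := by
    linear_combination (6 + (-2)*α + (4)*α^2 + (-3)*α^3 + α^4 + (-3)*α^5 + α^6 + (-1)*α^7 + (2)*α^8 + α^10 + (-1)*α^11 + (-1)*α^13 + α^16) * h + (-3 + α + (-5)*α^2 + (2)*α^3 + (-3)*α^4) * h2
  rw [e]
  refine ⟨α + α^3, α + α^2, ?_, ?_⟩
  · linear_combination (-1 + (-3)*α + (-5)*α^2 + (-2)*α^3 + α^4 + (4)*α^5 + (4)*α^6 + (3)*α^7 + (2)*α^8 + α^9) * h + ((2)*α + (3)*α^2 + (3)*α^3 + (3)*α^4) * h2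
  · linear_combination (-6 + (-7)*α + (-4)*α^2 + α^3 + (6)*α^4 + (7)*α^5 + (4)*α^6 + α^7) * h + (3 + (4)*α + (6)*α^2 + (3)*α^3 + (-1)*α^4) * h2

theorem pt_22 {F : Type*} [Field F] (α : F) (h : α ^ 5 + α ^ 2 + 1 = 0) (h2 : (2 : F) = 0) :
    Pt α (α ^ 22) := by
  have e : α ^ 22 = 1 + α^2 + α^4 := by
    linear_combination (-5 + (6)*α + (-2)*α^2 + (4)*α^3 + (-3)*α^4 + α^5 + (-3)*α^6 + α^7 + (-1)*α^8 + (2)*α^9 + α^11 + (-1)*α^12 + (-1)*α^14 + α^17) * h + (2 + (-3)*α + (3)*α^2 + (-5)*α^3 + (2)*α^4) * h2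
  rw [e]
  refine ⟨α + α^3 + α^4, α^4, ?_, ?_⟩
  · linear_combination ((-2)*α + (4)*α^2 + (5)*α^3 + (7)*α^4 + (7)*α^5 + (9)*α^6 + (7)*α^7 + (5)*α^8 + (3)*α^9 + (2)*α^10 + α^11) * h + (-1 + (2)*α + (-2)*α^2 + α^3 + (-1)*α^4) * h2
  · linear_combination (-17 + (12)*α + (-11)*α^2 + (11)*α^3 + (-7)*α^4 + (6)*α^5 + (-3)*α^6 + (5)*α^7 + (-1)*α^8 + (2)*α^9 + α^11) * h + (8 + (-6)*α + (13)*α^2 + (-12)*α^3 + (9)*α^4) * h2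

theorem pt_23 {F : Type*} [Field F] (α : F) (h : α ^ 5 + α ^ 2 + 1 = 0) (h2 : (2 : F) = 0) :
    Pt α (α ^ 23) := by
  have e : α ^ 23 = 1 + α + α^2 + α^3 := by
    linear_combination (5 + (-5)*α + (6)*α^2 + (-2)*α^3 + (4)*α^4 + (-3)*α^5 + α^6 + (-3)*α^7 + α^8 + (-1)*α^9 + (2)*α^10 + α^12 + (-1)*α^13 + (-1)*α^15 + α^18) * h + (-3 + (2)*α + (-6)*α^2 + (3)*α^3 + (-5)*α^4) * h2
  rw [e]
  refine ⟨α + α^2 + α^4, α + α^3, ?_, ?_⟩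
  · linear_combination (-4 + (8)*α + (16)*α^2 + (21)*α^3 + (19)*α^4 + (14)*α^5 + (10)*α^6 + (5)*α^7 + (2)*α^8 + α^9) * h + (1 + (-4)*α + (-4)*α^2 + (-9)*α^3 + (-7)*α^4) * h2
  · linear_combination (1 + (10)*α + (13)*α^2 + (11)*α^3 + (9)*α^4 + (5)*α^5 + (2)*α^6 + α^7) * h + (-1 + (-4)*α + (-5)*α^2 + (-7)*α^3 + (-3)*α^4) * h2

theorem pt_27 {F : Type*} [Field F] (α : F) (h : α ^ 5 + α ^ 2 + 1 = 0) (h2 : (2 : F) = 0) :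
    Pt α (α ^ 27) := by
  have e : α ^ 27 = 1 + α + α^3 := by
    linear_combination (15 + (-11)*α + (7)*α^2 + (-10)*α^3 + (5)*α^4 + (-5)*α^5 + (6)*α^6 + (-2)*α^7 + (4)*α^8 + (-3)*α^9 + α^10 + (-3)*α^11 + α^12 + (-1)*α^13 + (2)*α^14 + α^16 + (-1)*α^17 + (-1)*α^19 + α^22) * h + (-8 + (5)*α + (-11)*α^2 + (10)*α^3 + (-6)*α^4) * h2
  rw [e]
  refine ⟨α + α^2 + α^3 + α^4, α + α^2 + α^3, ?_, ?_⟩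
  · linear_combination (-2 + (8)*α + (18)*α^2 + (22)*α^3 + (19)*α^4 + (15)*α^5 + (10)*α^6 + (5)*α^7 + (2)*α^8 + α^9) * h + ((-4)*α + (-5)*α^2 + (-8)*α^3 + (-7)*α^4) * h2
  · linear_combination (7 + (14)*α + (15)*α^2 + (13)*α^3 + (9)*α^4 + (5)*α^5 + (2)*α^6 + α^7) * h + (-4 + (-6)*α + (-7)*α^2 + (-7)*α^3 + (-1)*α^4) * h2

theorem pt_30 {F : Type*} [Field F] (α : F) (h : α ^ 5 + α ^ 2 + 1 = 0) (h2 : (2 : F) = 0) :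
    Pt α (α ^ 30) := by
  have e : α ^ 30 = α + α^4 := by
    linear_combination (-22 + (21)*α + (-12)*α^2 + (15)*α^3 + (-11)*α^4 + (7)*α^5 + (-10)*α^6 + (5)*α^7 + (-5)*α^8 + (6)*α^9 + (-2)*α^10 + (4)*α^11 + (-3)*α^12 + α^13 + (-3)*α^14 + α^15 + (-1)*α^16 + (2)*α^17 + α^19 + (-1)*α^20 + (-1)*α^22 + α^25) * h + (11 + (-11)*α + (17)*α^2 + (-18)*α^3 + (11)*α^4) * h2
  rw [e]
  refine ⟨α + α^2, α + α^3 + α^4, ?_, ?_⟩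
  · linear_combination (-3 + α + (3)*α^2 + (2)*α^3 + (2)*α^4 + (2)*α^5 + (2)*α^6 + α^7) * h + (1 + α^3) * h2
  · linear_combination (2 + (3)*α^3 + (5)*α^4 + (2)*α^5 + (3)*α^6 + (6)*α^7 + (3)*α^8 + α^9 + (2)*α^10 + α^11) * h + (-1 + (-1)*α^3 + (-1)*α^4) * h2

def ks : Fin 16 → ℕ := ![0, 1, 2, 3, 5, 7, 8, 10, 11, 18, 19, 21, 22, 23, 27, 30]

theorem pts {F : Type*} [Field F] (α : F) (h : α ^ 5 + α ^ 2 + 1 = 0) (h2 : (2 : F) = 0)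
    (i : Fin 16) : Pt α (α ^ ks i) := by
  fin_cases i
  exacts [pt_0 α h h2, pt_1 α h h2, pt_2 α h h2, pt_3 α h h2, pt_5 α h h2, pt_7 α h h2, pt_8 α h h2, pt_10 α h h2, pt_11 α h h2, pt_18 α h h2, pt_19 α h h2, pt_21 α h h2, pt_22 α h h2, pt_23 α h h2, pt_27 α h h2, pt_30 α h h2]

theorem ks_inj : Function.Injective ks := by decide

theorem ks_lt (i : Fin 16) : ks i < 31 := by
  revert i; decide


/-- The zeros over one fibre are counted by the multiplicity of the norm. -/
theorem fibre_dvd {F : Type*} [Field F] [DecidableEq F] [CharP F 2] (q q1 q2 f0 f1 f2 : F[X])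
    (s x y : F)
    (hx : (x ^ 2 + x) * q.eval s = q1.eval s) (hy : (y ^ 2 + y) * q.eval s = q2.eval s) :
    (X - C s) ^ (∑ a : Fin 2, ∑ b : Fin 2,
      if f0.eval s + f1.eval s * (x + ((a : ℕ) : F)) + f2.eval s * (y + ((b : ℕ) : F)) = 0
      then 1 else 0) ∣ Nm q q1 q2 f0 f1 f2 := by
  classical
  have key := core6 (X - C s) q (q1 - ((C x) ^ 2 + C x) * q) (q2 - ((C y) ^ 2 + C y) * q)
    (f0 + f1 * C x + f2 * C y) f1 f2
    (by rw [dvd_iff_isRoot]; simp [hx]) (by rw [dvd_iff_isRoot]; simp [hy])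
  rw [← Nm_shift] at key
  refine (pow_dvd_pow _ (le_of_eq ?_)).trans key
  simp only [dvd_iff_isRoot, IsRoot.def, Fin.sum_univ_two, eval_add, eval_mul, eval_C]
  have e1 : f0.eval s + f1.eval s * (x + (((0 : Fin 2) : ℕ) : F))
      + f2.eval s * (y + (((1 : Fin 2) : ℕ) : F))
      = f0.eval s + f1.eval s * x + f2.eval s * y + f2.eval s := by
    simp; ring
  have e2 : f0.eval s + f1.eval s * (x + (((1 : Fin 2) : ℕ) : F))
      + f2.eval s * (y + (((0 : Fin 2) : ℕ) : F))
      = f0.eval s + f1.eval s * x + f2.eval s * y + f1.eval s := by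
    simp; ring
  have e3 : f0.eval s + f1.eval s * (x + (((1 : Fin 2) : ℕ) : F))
      + f2.eval s * (y + (((1 : Fin 2) : ℕ) : F))
      = f0.eval s + f1.eval s * x + f2.eval s * y + f1.eval s + f2.eval s := by
    simp; ring
  have e0 : f0.eval s + f1.eval s * (x + (((0 : Fin 2) : ℕ) : F))
      + f2.eval s * (y + (((0 : Fin 2) : ℕ) : F))
      = f0.eval s + f1.eval s * x + f2.eval s * y := by
    simp
  rw [e0, e1, e2, e3]
  ring

/-- Evaluation map at the 64 points. -/
noncomputable def ev {F : Type*} [Field F] (t : ℕ) (s x y : Fin 16 → F)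
    (e : Fin 64 ≃ Fin 16 × Fin 2 × Fin 2) : (Fin 3 → degreeLT F t) →ₗ[F] (Fin 64 → F) where
  toFun f j := (f 0 : F[X]).eval (s (e j).1)
    + (f 1 : F[X]).eval (s (e j).1) * (x (e j).1 + (((e j).2.1 : ℕ) : F))
    + (f 2 : F[X]).eval (s (e j).1) * (y (e j).1 + (((e j).2.2 : ℕ) : F))
  map_add' f g := by
    funext j; simp; ring
  map_smul' c f := by
    funext j; simp; ring

theorem zero_of_roots {F : Type*} [Field F] (t : ℕ) (ht : t ≤ 16) (s : Fin 16 → F)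
    (hs : Function.Injective s) (f : F[X]) (hf : f ∈ degreeLT F t)
    (h : ∀ i, f.eval (s i) = 0) : f = 0 := by
  apply eq_zero_of_degree_lt_of_eval_index_eq_zero (v := s) Finset.univ hs.injOn
  · exact (mem_degreeLT.1 hf).trans_le (by simpa using ht)
  · intro i _; exact h i

theorem ev_inj {F : Type*} [Field F] (t : ℕ) (ht : t ≤ 16) (s x y : Fin 16 → F)
    (hs : Function.Injective s)
    (e : Fin 64 ≃ Fin 16 × Fin 2 × Fin 2) : Function.Injective (ev t s x y e) := by
  rw [injective_iff_map_eq_zero]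
  intro f hf
  have h : ∀ i a b, (f 0 : F[X]).eval (s i) + (f 1 : F[X]).eval (s i) * (x i + ((a : Fin 2) : ℕ))
      + (f 2 : F[X]).eval (s i) * (y i + ((b : Fin 2) : ℕ)) = 0 := by
    intro i a b
    have := congrFun hf (e.symm (i, a, b))
    simpa [ev] using this
  have h1 : ∀ i, (f 1 : F[X]).eval (s i) = 0 := fun i => by
    have h00 := h i 0 0
    have h10 := h i 1 0
    simp at h00 h10
    linear_combination h10 - h00
  have h2 : ∀ i, (f 2 : F[X]).eval (s i) = 0 := fun i => by
    have h00 := h i 0 0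
    have h10 := h i 0 1
    simp at h00 h10
    linear_combination h10 - h00
  have h0 : ∀ i, (f 0 : F[X]).eval (s i) = 0 := fun i => by
    have h00 := h i 0 0
    rw [h1, h2] at h00
    simpa using h00
  funext k
  apply Subtype.ext
  apply zero_of_roots t ht s hs _ (f k).2
  fin_cases k
  exacts [h0, h1, h2]

theorem code_exists {F : Type*} [Field F] [CharP F 2] (q q1 q2 : F[X]) (hq : Prime q)
    (hqd : q.natDegree ≤ 2) (hd1 : q1.natDegree ≤ 2) (hd2 : q2.natDegree ≤ 2)
    (hn1 : ¬ q ∣ q1) (hn2 : ¬ q ∣ q2) (hn3 : ¬ q ∣ q1 + q2)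
    (s x y : Fin 16 → F) (hs : Function.Injective s)
    (hx : ∀ i, (x i ^ 2 + x i) * q.eval (s i) = q1.eval (s i))
    (hy : ∀ i, (y i ^ 2 + y i) * q.eval (s i) = q2.eval (s i))
    (t : ℕ) (ht1 : 1 ≤ t) (ht : t ≤ 16) :
    ∃ D : Submodule F (Fin 64 → F),
        Module.finrank F D = 3 * t ∧
        (∀ x : Fin 64 → F, x ∈ D → x ≠ 0 →
          64 - 4 * t ≤ Nat.card {i : Fin 64 // x i ≠ 0}) ∧
        (∀ i : Fin 64, ∃ I : Finset (Fin 64), i ∉ I ∧ I.card ≤ 3 ∧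
          ∀ x ∈ D, ∀ y ∈ D, (∀ j ∈ I, x j = y j) → x i = y i) := by
  classical
  let e : Fin 64 ≃ Fin 16 × Fin 2 × Fin 2 := Fintype.equivOfCardEq (by simp)
  refine ⟨LinearMap.range (ev t s x y e), ?_, ?_, ?_⟩
  · rw [LinearMap.finrank_range_of_inj (ev_inj t ht s x y hs e), Module.finrank_pi_fintype]
    simp [(degreeLTEquiv F t).finrank_eq]
  · rintro _ ⟨f, rfl⟩ hne
    have hN : Nm q q1 q2 (f 0 : F[X]) (f 1) (f 2) ≠ 0 := by
      intro h
      obtain ⟨h0, h1, h2⟩ := Nm_ne _ _ _ _ _ _ hq hn1 hn2 hn3 h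
      apply hne
      funext j
      simp [ev, h0, h1, h2]
    have hdeg : ∀ k, (f k : F[X]).natDegree ≤ t - 1 := fun k => by
      have h1 := mem_degreeLT.1 (f k).2
      by_cases h0 : (f k : F[X]) = 0
      · simp [h0]
      · have := (natDegree_lt_iff_degree_lt h0).2 h1
        omega
    have hND := Nm_deg q q1 q2 _ _ _ (t - 1) hqd hd1 hd2 (hdeg 0) (hdeg 1) (hdeg 2)
    let z : Fin 16 → ℕ := fun i => ∑ a : Fin 2, ∑ b : Fin 2,
      if (f 0 : F[X]).eval (s i) + (f 1 : F[X]).eval (s i) * (x i + ((a : ℕ) : F))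
        + (f 2 : F[X]).eval (s i) * (y i + ((b : ℕ) : F)) = 0 then 1 else 0
    have hdvd : ∏ i, (X - C (s i)) ^ z i ∣ Nm q q1 q2 (f 0 : F[X]) (f 1) (f 2) := by
      apply Finset.prod_dvd_of_coprime
      · intro i _ j _ hij
        exact (pairwise_coprime_X_sub_C hs hij).pow
      · intro i _
        exact fibre_dvd q q1 q2 _ _ _ _ _ _ (hx i) (hy i)
    have hle := natDegree_le_of_dvd hdvd hN
    rw [natDegree_prod_of_monic _ _ (fun i _ => (monic_X_sub_C _).pow _)] at hle
    simp only [natDegree_pow, natDegree_X_sub_C, mul_one] at hle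
    have hz : (Finset.univ.filter (fun j => ev t s x y e f j = 0)).card = ∑ i, z i := by
      rw [Finset.card_filter, ← e.symm.sum_comp, Fintype.sum_prod_type]
      refine Finset.sum_congr rfl fun i _ => ?_
      rw [Fintype.sum_prod_type]
      simp [z, ev]
    have hc := Finset.card_filter_add_card_filter_not (s := (Finset.univ : Finset (Fin 64)))
      (fun j => ev t s x y e f j = 0)
    rw [Nat.card_eq_fintype_card, Fintype.card_subtype]
    simp only [Finset.card_univ, Fintype.card_fin] at hc
    simp only [ne_eq]
    omega
  · intro j
    obtain ⟨⟨i, a, b⟩, rfl⟩ := e.symm.surjective j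
    refine ⟨{e.symm (i, a + 1, b), e.symm (i, a, b + 1), e.symm (i, a + 1, b + 1)}, ?_,
      Finset.card_le_three, ?_⟩
    · simp
    · rintro _ ⟨f, rfl⟩ _ ⟨g, rfl⟩ h
      simp only [Finset.mem_insert, Finset.mem_singleton, forall_eq_or_imp, forall_eq] at h
      obtain ⟨h1, h2, h3⟩ := h
      have key : ∀ f, ev t s x y e f (e.symm (i, a, b)) = ev t s x y e f (e.symm (i, a + 1, b))
          + ev t s x y e f (e.symm (i, a, b + 1)) + ev t s x y e f (e.symm (i, a + 1, b + 1)) := by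
        intro f
        fin_cases a <;> fin_cases b <;> simp [ev] <;> grind
      rw [key, key, h1, h2, h3]

theorem exists_root : ∃ α : GaloisField 2 5, α ^ 5 + α ^ 2 + 1 = 0 := by
  classical
  by_contra hno
  push Not at hno
  have h2 : (2 : GaloisField 2 5) = 0 := CharP.cast_eq_zero (GaloisField 2 5) 2
  let _ : Fintype (GaloisField 2 5) := Fintype.ofFinite _
  have hcard : Fintype.card (GaloisField 2 5) = 32 := by
    rw [← Nat.card_eq_fintype_card, GaloisField.card 2 5 (by norm_num)]; norm_num
  let M : (GaloisField 2 5)[X] := X + X^3 + X^5 + X^6 + X^7 + X^9 + X^10 + X^14 + X^15 + X^16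
    + X^17 + X^18 + X^21 + X^22 + X^24 + X^27
  have hM : M.natDegree = 27 := by
    unfold M; compute_degree!
  have hM0 : M = 0 := by
    apply eq_zero_of_natDegree_lt_card_of_eval_eq_zero M (ι := GaloisField 2 5)
      Function.injective_id
    · intro α
      have hp : α ^ 32 = α := by
        have := FiniteField.pow_card α
        rwa [hcard] at this
      have : (α ^ 5 + α ^ 2 + 1) * M.eval α = 0 := by
        simp only [M, eval_add, eval_X, eval_pow]
        linear_combination hp - ((-1)*α + (-1)*α^3 + (-1)*α^5 + (-1)*α^6 + (-1)*α^7 + (-1)*α^8 + (-1)*α^9 + (-1)*α^10 + (-1)*α^11 + (-1)*α^12 + (-1)*α^14 + (-1)*α^15 + (-1)*α^16 + (-1)*α^17 + (-1)*α^18 + (-1)*α^19 + (-1)*α^20 + (-1)*α^21 + (-1)*α^22 + (-1)*α^23 + (-1)*α^24 + (-1)*α^26 + (-1)*α^27 + (-1)*α^29) * h2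
      exact (mul_eq_zero.1 this).resolve_left (hno α)
    · rw [hM, hcard]; norm_num
  rw [hM0] at hM
  simp at hM

theorem q_linear {F : Type*} [Field F] (a b : F)
    (h : (X ^ 2 + X + 1 : F[X]) ∣ C a * X + C b) : a = 0 ∧ b = 0 := by
  have hd : (X ^ 2 + X + 1 : F[X]).natDegree = 2 := by compute_degree!
  have h0 := eq_zero_of_dvd_of_natDegree_lt h (by
    rw [hd]; exact (natDegree_linear_le).trans_lt (by norm_num))
  constructor
  · simpa using congrArg (fun p => coeff p 1) h0
  · simpa using congrArg (fun p => coeff p 0) h0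

theorem exists_LRC_F32_length64 :
    ∀ t : ℕ, 1 ≤ t → t ≤ 16 →
      ∃ C : Submodule (GaloisField 2 5) (Fin 64 → GaloisField 2 5),
        Module.finrank (GaloisField 2 5) C = 3 * t ∧
        (∀ x : Fin 64 → GaloisField 2 5, x ∈ C → x ≠ 0 →
          64 - 4 * t ≤ Nat.card {i : Fin 64 // x i ≠ 0}) ∧
        (∀ i : Fin 64, ∃ I : Finset (Fin 64), i ∉ I ∧ I.card ≤ 3 ∧
          ∀ x ∈ C, ∀ y ∈ C, (∀ j ∈ I, x j = y j) → x i = y i) := by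
  intro t ht1 ht
  obtain ⟨α, h⟩ := exists_root
  have h2 : (2 : GaloisField 2 5) = 0 := CharP.cast_eq_zero (GaloisField 2 5) 2
  have h31 : α ^ 31 = 1 := by
    linear_combination (23 + (-22)*α + (21)*α^2 + (-12)*α^3 + (15)*α^4 + (-11)*α^5 + (7)*α^6 + (-10)*α^7 + (5)*α^8 + (-5)*α^9 + (6)*α^10 + (-2)*α^11 + (4)*α^12 + (-3)*α^13 + α^14 + (-3)*α^15 + α^16 + (-1)*α^17 + (2)*α^18 + α^20 + (-1)*α^21 + (-1)*α^23 + α^26) * h + (-12 + (11)*α + (-22)*α^2 + (17)*α^3 + (-18)*α^4) * h2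
  have hα0 : α ≠ 0 := by
    rintro rfl
    simp at h
  have hα1 : α ≠ 1 := by
    rintro rfl
    have : (1 : GaloisField 2 5) = 0 := by linear_combination h - h2
    exact one_ne_zero this
  have hord : orderOf α = 31 := by
    have : Fact (Nat.Prime 31) := ⟨by norm_num⟩
    exact orderOf_eq_prime h31 hα1
  choose x y hx hy using pts α h h2
  have hd : (X ^ 2 + X + 1 : (GaloisField 2 5)[X]).natDegree = 2 := by compute_degree!
  have hirr : Irreducible (X ^ 2 + X + 1 : (GaloisField 2 5)[X]) := by
    rw [irreducible_iff_roots_eq_zero_of_degree_le_three (by rw [hd]) (by rw [hd]; norm_num)]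
    rw [Multiset.eq_zero_iff_forall_notMem]
    intro r hr
    have hr := isRoot_of_mem_roots hr
    simp only [IsRoot.def, eval_add, eval_pow, eval_X, eval_one] at hr
    have hr3 : r ^ 3 = 1 := by linear_combination (r - 1) * hr
    have hr32 : r ^ 32 = r := by
      let _ : Fintype (GaloisField 2 5) := Fintype.ofFinite _
      have hcard : Fintype.card (GaloisField 2 5) = 32 := by
        rw [← Nat.card_eq_fintype_card, GaloisField.card 2 5 (by norm_num)]; norm_num
      have := FiniteField.pow_card r
      rwa [hcard] at this
    have hr1 : r ^ 2 = r := by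
      calc r ^ 2 = r ^ 2 * (r ^ 3) ^ 10 := by rw [hr3]; ring
        _ = r ^ 32 := by ring
        _ = r := hr32
    have hr0 : (1 : GaloisField 2 5) = 0 := by linear_combination hr - hr1 - r * h2
    exact one_ne_zero hr0
  refine code_exists (X ^ 2 + X + 1) (X ^ 2 + C α * X + C (α ^ 2 + 1))
    (C (α ^ 2 + 1) * X + C (α ^ 4 + α ^ 3)) hirr.prime hd.le ?_ ?_ ?_ ?_ ?_
    (fun i => α ^ ks i) x y ?_ ?_ ?_ t ht1 ht
  · compute_degree
  · exact natDegree_linear_le.trans (by norm_num)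
  · intro hdv
    have := dvd_sub_self_right.2 hdv
    rw [show (X ^ 2 + C α * X + C (α ^ 2 + 1) - (X ^ 2 + X + 1) : (GaloisField 2 5)[X])
      = C (α - 1) * X + C (α ^ 2) by simp; ring] at this
    exact hα0 (pow_eq_zero_iff two_ne_zero |>.1 (q_linear _ _ this).2)
  · intro hdv
    have h5 := (q_linear _ _ hdv).1
    apply hα0
    apply pow_eq_zero_iff (n := 5) (by norm_num) |>.1
    linear_combination h - h5
  · intro hdv
    have := dvd_sub_self_right.2 hdv
    rw [show (X ^ 2 + C α * X + C (α ^ 2 + 1) + (C (α ^ 2 + 1) * X + C (α ^ 4 + α ^ 3))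
        - (X ^ 2 + X + 1) : (GaloisField 2 5)[X])
      = C (α + α ^ 2) * X + C (α ^ 2 + α ^ 4 + α ^ 3) by simp; ring] at this
    have h5 := (q_linear _ _ this).1
    have h6 : α * (α - 1) = 0 := by linear_combination h5 - α * h2
    rcases mul_eq_zero.1 h6 with h7 | h7
    · exact hα0 h7
    · exact hα1 (sub_eq_zero.1 h7)
  · intro i j hij
    apply ks_inj
    apply pow_injOn_Iio_orderOf _ _ hij
    · rw [hord]; exact ks_lt i
    · rw [hord]; exact ks_lt j
  · intro i
    simpa using hx i
  · intro i
    simpa using hy i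
end

section
/- For every integer t with 3 ≤ t ≤ 18 there exists a linear code over the field with 16 elements of length 63, dimension 2t, minimum distance at least 63 − (3t + 8) = 55 − 3t, and locality 2. In particular, taking t = 16 gives a linear code over the field with 16 elements of length 63, dimension 32, minimum distance at least 7, and locality 2, and taking t = 14 gives one of length 63, dimension 28, minimum distance at least 13, and locality 2. -/
/-- The normal-form monomial of weight `w` (where `x` has weight 4 and `y` has weight 5). -/
def lrcMon {A : Type*} [CommRing A] (X Y : A) (w : ℕ) : A :=
  X ^ ((w - 5 * (w % 4)) / 4) * Y ^ (w % 4)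

/-- The evaluations of all monomials span the space of functions on a finite point set. -/
theorem lrc_span_top {F ι : Type*} [Field F] [Fintype F] [Fintype ι]
    (X Y : ι → F) (hinj : ∀ i j, X i = X j → Y i = Y j → i = j)
    (B : Submodule F (ι → F)) (hB : ∀ i j : ℕ, X ^ i * Y ^ j ∈ B) : B = ⊤ := by
  classical
  have hX : ∀ p q : Polynomial F,
      (fun k => p.eval (X k) * q.eval (Y k)) ∈ B := by
    intro p q
    induction p using Polynomial.induction_on' with
    | add p₁ p₂ h₁ h₂ =>
      have := B.add_mem h₁ h₂
      convert this using 1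
      ext k
      simp [add_mul]
    | monomial n a =>
      induction q using Polynomial.induction_on' with
      | add p₁ p₂ h₁ h₂ =>
        have := B.add_mem h₁ h₂
        convert this using 1
        ext k
        simp [mul_add]
      | monomial m b =>
        have := B.smul_mem (a * b) (hB n m)
        convert this using 1
        ext k
        simp only [Polynomial.eval_monomial, Pi.smul_apply, Pi.mul_apply, Pi.pow_apply, smul_eq_mul]
        ring
  rw [eq_top_iff]
  intro f _
  have hf : f = ∑ i, f i • (Pi.single i (1 : F) : ι → F) := by
    ext k
    simp [Finset.sum_apply, Pi.single_apply]
  rw [hf]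
  refine B.sum_mem fun i _ => B.smul_mem _ ?_
  have := hX (Lagrange.interpolate Finset.univ id (Pi.single (X i) (1 : F)))
    (Lagrange.interpolate Finset.univ id (Pi.single (Y i) (1 : F)))
  convert this using 1
  ext k
  have e : ∀ a b : F, Polynomial.eval a
      (Lagrange.interpolate Finset.univ id (Pi.single b (1 : F))) = (Pi.single b (1 : F) : F → F) a := by
    intro a b
    exact Lagrange.eval_interpolate_at_node (s := Finset.univ) (v := id) (i := a)
      (Pi.single b (1 : F)) (Set.injOn_id _) (Finset.mem_univ a)
  rw [e, e]
  simp only [Pi.single_apply]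
  by_cases hk : k = i
  · simp [hk]
  · by_cases h1 : X k = X i
    · have : Y k ≠ Y i := fun h2 => hk (hinj _ _ h1 h2)
      simp [hk, this]
    · simp [hk, h1]

/-- Footprint bound: a function of pole order `v` vanishes at at most `v` points. -/
theorem lrc_footprint {F ι : Type*} [Field F] [Fintype F] [Fintype ι]
    (X Y : ι → F) (hcurve : Y ^ 4 + Y = X ^ 5)
    (hinj : ∀ i j, X i = X j → Y i = Y j → i = j)
    (c : ℕ → F) (T : Finset ℕ) (v : ℕ) (hvT : v ∈ T) (hcv : c v ≠ 0)
    (hTS : ∀ w ∈ T, 5 * (w % 4) ≤ w) (hTv : ∀ w ∈ T, c w ≠ 0 → w ≤ v)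
    (hf : ∑ w ∈ T, c w • lrcMon X Y w = 0) : Fintype.card ι ≤ v := by
  classical
  set S : Set ℕ := {s | 5 * (s % 4) ≤ s ∧ ¬ ∃ s', 5 * (s' % 4) ≤ s' ∧ s = v + s'} with hS
  have hvS := hTS v hvT
  have hadd : ∀ k s : ℕ, 5 * (s % 4) ≤ s → 5 * ((s + k * v) % 4) ≤ s + k * v := by
    intro k
    induction k with
    | zero => intro s hs; simpa using hs
    | succ k ih =>
      intro s hs
      have := ih s hs
      have e : (k + 1) * v = k * v + v := by ring
      rw [e]
      generalize k * v = u at this ⊢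
      omega
  have hinjS : ∀ s ∈ S, ∀ s' ∈ S, s % v = s' % v → s ≤ s' → s = s' := by
    rintro s ⟨hs, hs1⟩ s' ⟨hs', hs1'⟩ hmod hle
    by_contra hne
    have hdvd : v ∣ s' - s := (Nat.modEq_iff_dvd' hle).1 hmod
    obtain ⟨k, hk⟩ := hdvd
    apply hs1'
    rcases k with _ | k
    · simp at hk
      omega
    · refine ⟨s + k * v, hadd k s hs, ?_⟩
      have : v * (k + 1) = k * v + v := by ring
      omega
  have hv0 : ∀ s ∈ S, s % v < v := by
    rintro s ⟨hs, hs1⟩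
    rcases Nat.eq_zero_or_pos v with h | h
    · exact absurd ⟨s, hs, by omega⟩ hs1
    · exact Nat.mod_lt _ h
  have hmap : Set.InjOn (fun s => s % v) S := by
    intro s hs s' hs' h
    rcases le_total s s' with hle | hle
    · exact hinjS s hs s' hs' h hle
    · exact (hinjS s' hs' s hs h.symm hle).symm
  have himg : (fun s => s % v) '' S ⊆ (Finset.range v : Set ℕ) := by
    rintro _ ⟨s, hs, rfl⟩
    simpa using hv0 s hs
  have hfin : S.Finite := Set.Finite.of_finite_image ((Finset.finite_toSet _).subset himg) hmap
  have hcard : hfin.toFinset.card ≤ v := by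
    rw [← Finset.card_range v]
    apply Finset.card_le_card_of_injOn (fun s => s % v)
    · intro s hs
      have := hv0 s (by simpa using hs)
      simpa using this
    · simpa using hmap
  set B : Submodule F (ι → F) :=
    Submodule.span F ((hfin.toFinset.image (lrcMon X Y) : Finset (ι → F)) : Set (ι → F)) with hBdef
  have hmain : ∀ n i j : ℕ, 4 * i + 5 * j = n → X ^ i * Y ^ j ∈ B := by
    intro n
    induction n using Nat.strong_induction_on with
    | _ n ih =>
    have H : ∀ i j : ℕ, 4 * i + 5 * j < n → X ^ i * Y ^ j ∈ B := fun i j h => ih _ h i j rfl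
    have hnf : ∀ j i : ℕ, 4 * i + 5 * j = n → (X ^ i * Y ^ j ∈ B ↔ lrcMon X Y n ∈ B) := by
      intro j
      induction j using Nat.strong_induction_on with
      | _ j jh =>
      intro i hij
      by_cases hj : j < 4
      · have h1 : n % 4 = j := by omega
        have h2 : (n - 5 * (n % 4)) / 4 = i := by omega
        rw [lrcMon, h2, h1]
      · obtain ⟨l, rfl⟩ : ∃ l, j = l + 4 := ⟨j - 4, by omega⟩
        rw [← jh l (by omega) (i + 5) (by omega)]
        have h1 : X ^ i * Y ^ (l + 1) ∈ B := H _ _ (by omega)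
        have h2 : X ^ (i + 5) * Y ^ l = X ^ i * Y ^ (l + 4) + X ^ i * Y ^ (l + 1) := by
          rw [pow_add, ← hcurve]
          ring
        rw [h2, B.add_mem_iff_left h1]
    suffices h : (∃ i j : ℕ, 4 * i + 5 * j = n) → lrcMon X Y n ∈ B by
      intro i j hij
      exact (hnf j i hij).2 (h ⟨i, j, hij⟩)
    rintro ⟨i₀, j₀, h₀⟩
    have hdiv : i₀ + j₀ ≤ n / 4 := by omega
    have hnS : 5 * (n % 4) ≤ n := by omega
    by_cases hn : ∃ s', 5 * (s' % 4) ≤ s' ∧ n = v + s'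
    · obtain ⟨s, hs, rfl⟩ := hn
      have hprod : ∀ w, lrcMon X Y s * lrcMon X Y w =
          X ^ ((s - 5 * (s % 4)) / 4 + (w - 5 * (w % 4)) / 4) * Y ^ (s % 4 + w % 4) := by
        intro w
        simp only [lrcMon]
        ring
      have hw : ∀ w, 5 * (w % 4) ≤ w →
          4 * ((s - 5 * (s % 4)) / 4 + (w - 5 * (w % 4)) / 4) + 5 * (s % 4 + w % 4) = w + s := by
        intro w hw
        omega
      rw [← hnf _ _ (hw v hvS), ← hprod]
      have h0 : ∑ w ∈ T, c w • (lrcMon X Y s * lrcMon X Y w) = 0 := by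
        have := congrArg (fun g => lrcMon X Y s * g) hf
        simpa [Finset.mul_sum] using this
      rw [← Finset.add_sum_erase _ _ hvT] at h0
      have h1 : ∑ w ∈ T.erase v, c w • (lrcMon X Y s * lrcMon X Y w) ∈ B := by
        refine B.sum_mem fun w hwT => ?_
        rw [Finset.mem_erase] at hwT
        by_cases hcw : c w = 0
        · simp [hcw]
        · refine B.smul_mem _ ?_
          rw [hprod]
          apply H
          rw [hw w (hTS w hwT.2)]
          have := hTv w hwT.2 hcw
          omega
      have h2 : c v • (lrcMon X Y s * lrcMon X Y v) ∈ B := by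
        rw [eq_neg_of_add_eq_zero_left h0]
        exact B.neg_mem h1
      exact (B.smul_mem_iff hcv).1 h2
    · apply Submodule.subset_span
      rw [Finset.mem_coe, Finset.mem_image]
      exact ⟨n, by simpa [hS] using ⟨hnS, by simpa using hn⟩, rfl⟩
  have htop := lrc_span_top X Y hinj B (fun i j => hmain _ i j rfl)
  have h1 : Module.finrank F B = Fintype.card ι := by
    rw [htop, finrank_top, Module.finrank_fintype_fun_eq_card]
  rw [← h1]
  exact ((finrank_span_finset_le_card _).trans Finset.card_image_le).trans hcard

/-- The weights used for the code. -/
def lrcWeights (t : ℕ) : Finset ℕ :=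
  (Finset.range (3 * t + 9)).filter fun w =>
    5 * (w % 4) ≤ w ∧ w ≠ 8 ∧ ((w % 3 = 0 ∧ w ≤ 3 * t + 3) ∨ w % 3 = 2)

theorem lrcWeights_card (t : ℕ) (h3 : 3 ≤ t) (h18 : t ≤ 18) : (lrcWeights t).card = 2 * t := by
  interval_cases t <;> rfl

/-- Over a field with 16 elements, `y ↦ y ^ 4 + y` is four-to-one onto the fixed points of `u ↦ u ^ 4`. -/
theorem lrc_trace {F : Type*} [Field F] [Fintype F] [CharP F 2] [DecidableEq F]
    (hF : Fintype.card F = 16) :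
    (∀ u : F, u ^ 4 = u → (Finset.univ.filter fun y : F => y ^ 4 + y = u).card = 4) := by
  have hF' : ∀ a : F, a ^ 16 = a := fun a => by rw [← hF]; exact FiniteField.pow_card a
  have h4 : ∀ a b : F, (a + b) ^ 4 = a ^ 4 + b ^ 4 := fun a b => by
    have : (4 : ℕ) = 2 ^ 2 := rfl
    rw [this]
    exact add_pow_char_pow a b 2 2
  let φ : F →+ F :=
    { toFun := fun y => y ^ 4 + y
      map_zero' := by simp
      map_add' := fun a b => by rw [h4]; ring }
  have hφ : ∀ y, φ y = y ^ 4 + y := fun _ => rfl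
  have hfix : (Finset.univ.filter fun u : F => u ^ 4 = u).card ≤ 4 := by
    have hd : (Polynomial.X ^ 4 - Polynomial.X : Polynomial F).natDegree = 4 := by
      compute_degree!
    have hne : (Polynomial.X ^ 4 - Polynomial.X : Polynomial F) ≠ 0 := by
      intro h
      rw [h] at hd
      simp at hd
    refine le_trans (Finset.card_le_card ?_)
      ((Multiset.toFinset_card_le _).trans ((Polynomial.card_roots' _).trans hd.le))
    intro u hu
    rw [Multiset.mem_toFinset, Polynomial.mem_roots hne]
    simpa [sub_eq_zero] using hu
  have hker : Nat.card φ.ker ≤ 4 := by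
    refine le_trans (le_of_eq ?_) hfix
    rw [← Fintype.card_subtype, ← Nat.card_eq_fintype_card]
    apply Nat.card_congr
    refine Equiv.subtypeEquivRight fun u => ?_
    rw [AddMonoidHom.mem_ker, hφ]
    exact CharTwo.add_eq_zero
  have hrange : Set.range φ ⊆ (Finset.univ.filter fun u : F => u ^ 4 = u : Finset F) := by
    rintro _ ⟨y, rfl⟩
    have : (y ^ 4 + y) ^ 4 = y ^ 4 + y := by
      rw [h4, ← pow_mul, hF' y, add_comm]
    simpa [hφ] using this
  have hrc : Nat.card φ.range ≤ (Finset.univ.filter fun u : F => u ^ 4 = u).card := by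
    rw [← Set.ncard_coe_finset]
    exact Set.ncard_le_ncard hrange (Finset.finite_toSet _)
  have hprod : Nat.card φ.ker * Nat.card φ.range = 16 := by
    rw [← hF, ← Nat.card_eq_fintype_card, ← AddSubgroup.card_mul_index φ.ker,
      AddSubgroup.index_ker]
  have hk4 : Nat.card φ.ker = 4 := by nlinarith
  have hr4 : Nat.card φ.range = 4 := by
    rw [hk4] at hprod
    omega
  have hsurj : Set.range φ = (Finset.univ.filter fun u : F => u ^ 4 = u : Finset F) := by
    apply Set.eq_of_subset_of_ncard_le hrange _ (Finset.finite_toSet _)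
    rw [Set.ncard_coe_finset]
    have : (Set.range φ).ncard = Nat.card φ.range := rfl
    omega
  intro u hu
  have hu' : u ∈ Set.range φ := by
    rw [hsurj]
    simpa using hu
  obtain ⟨y₀, hy₀⟩ := hu'
  rw [← Fintype.card_subtype, ← Nat.card_eq_fintype_card]
  refine Eq.trans (Eq.symm ?_) hk4
  apply Nat.card_congr
  refine (Equiv.addRight y₀).subtypeEquiv fun y => ?_
  rw [AddMonoidHom.mem_ker]
  change φ y = 0 ↔ φ (y + y₀) = u
  rw [map_add, hy₀]
  simp

theorem lrc_points {F : Type*} [Field F] [Fintype F] [CharP F 2] [DecidableEq F]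
    (hF : Fintype.card F = 16) :
    Fintype.card {p : F × F // (p.2 ^ 4 + p.2 = p.1 ^ 5) ∧ p ≠ 0} = 63 := by
  have hF' : ∀ a : F, a ^ 16 = a := fun a => by rw [← hF]; exact FiniteField.pow_card a
  have h64 : (Finset.univ.filter fun p : F × F => p.2 ^ 4 + p.2 = p.1 ^ 5).card = 64 := by
    rw [← Fintype.card_subtype]
    have e : {p : F × F // p.2 ^ 4 + p.2 = p.1 ^ 5} ≃ Σ x : F, {y : F // y ^ 4 + y = x ^ 5} :=
      { toFun := fun p => ⟨p.1.1, p.1.2, p.2⟩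
        invFun := fun q => ⟨(q.1, q.2.1), q.2.2⟩
        left_inv := fun _ => rfl
        right_inv := fun _ => rfl }
    rw [Fintype.card_congr e, Fintype.card_sigma]
    have : ∀ x : F, Fintype.card {y : F // y ^ 4 + y = x ^ 5} = 4 := by
      intro x
      rw [Fintype.card_subtype]
      apply lrc_trace hF
      calc (x ^ 5) ^ 4 = x ^ 16 * x ^ 4 := by ring
        _ = x ^ 5 := by rw [hF']; ring
    simp [this, hF]
  rw [Fintype.card_subtype]
  have : (Finset.univ.filter fun p : F × F => (p.2 ^ 4 + p.2 = p.1 ^ 5) ∧ p ≠ 0) =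
      (Finset.univ.filter fun p : F × F => p.2 ^ 4 + p.2 = p.1 ^ 5).erase 0 := by
    ext p
    simp [and_comm]
  rw [this, Finset.card_erase_of_mem (by simp), h64]

theorem lrc_zeta {F : Type*} [Field F] [Fintype F] [CharP F 2] [DecidableEq F]
    (hF : Fintype.card F = 16) : ∃ z : F, z ^ 2 + z + 1 = 0 := by
  have h := lrc_trace hF 0 (by simp)
  have h2 : ({0, 1} : Finset F).card < (Finset.univ.filter fun y : F => y ^ 4 + y = 0).card := by
    rw [h]
    exact lt_of_le_of_lt Finset.card_le_two (by norm_num)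
  obtain ⟨z, hz, hz'⟩ := Finset.exists_mem_notMem_of_card_lt_card h2
  refine ⟨z, ?_⟩
  simp only [Finset.mem_insert, Finset.mem_singleton, not_or, Finset.mem_filter,
    Finset.mem_univ, true_and] at hz hz'
  have h20 : (2 : F) = 0 := CharTwo.two_eq_zero
  have : z * (z - 1) * (z ^ 2 + z + 1) = 0 := by linear_combination hz - z * h20
  rcases mul_eq_zero.1 this with h | h
  · rcases mul_eq_zero.1 h with h | h
    · exact absurd h hz'.1
    · exact absurd (sub_eq_zero.1 h) hz'.2
  · exact h

theorem lrc_general {F : Type*} [Field F] [Fintype F] [CharP F 2]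
    (hF : Fintype.card F = 16) (t : ℕ) (h3 : 3 ≤ t) (h18 : t ≤ 18) :
    ∃ C : Submodule F (Fin 63 → F),
      Module.finrank F C = 2 * t ∧
      (∀ x : Fin 63 → F, x ∈ C → x ≠ 0 →
        55 - 3 * t ≤ Nat.card {i : Fin 63 // x i ≠ 0}) ∧
      (∀ i : Fin 63, ∃ I : Finset (Fin 63), i ∉ I ∧ I.card ≤ 2 ∧
        ∀ x ∈ C, ∀ y ∈ C, (∀ j ∈ I, x j = y j) → x i = y i) := by
  classical
  let e : Fin 63 ≃ {p : F × F // (p.2 ^ 4 + p.2 = p.1 ^ 5) ∧ p ≠ 0} :=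
    (finCongr (lrc_points hF).symm).trans (Fintype.equivFin _).symm
  let X : Fin 63 → F := fun i => (e i).1.1
  let Y : Fin 63 → F := fun i => (e i).1.2
  have hcurve : ∀ i, Y i ^ 4 + Y i = X i ^ 5 := fun i => (e i).2.1
  have hinj : ∀ i j, X i = X j → Y i = Y j → i = j := fun i j h1 h2 =>
    e.injective (Subtype.ext (Prod.ext h1 h2))
  have hY : ∀ i, Y i ≠ 0 := by
    intro i hi
    have h := hcurve i
    rw [hi] at h
    have hX : X i = 0 := by
      apply eq_zero_of_pow_eq_zero (n := 5)
      rw [← h]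
      simp
    exact (e i).2.2 (Prod.ext hX hi)
  have hex : ∀ a b : F, b ≠ 0 → b ^ 4 + b = a ^ 5 → ∃ i, X i = a ∧ Y i = b := by
    intro a b hb hab
    refine ⟨e.symm ⟨(a, b), hab, fun h => hb (congrArg Prod.snd h)⟩, ?_, ?_⟩ <;> simp [X, Y]
  have hTS : ∀ w ∈ lrcWeights t, 5 * (w % 4) ≤ w := by
    intro w hw
    simp only [lrcWeights, Finset.mem_filter] at hw
    exact hw.2.1
  have hTb : ∀ w ∈ lrcWeights t, w ≤ 3 * t + 8 := by
    intro w hw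
    simp only [lrcWeights, Finset.mem_filter, Finset.mem_range] at hw
    omega
  -- zero bound
  have hzero : ∀ c : ℕ → F, (∃ w ∈ lrcWeights t, c w ≠ 0) →
      Fintype.card {i : Fin 63 // (∑ w ∈ lrcWeights t, c w • lrcMon X Y w) i = 0} ≤ 3 * t + 8 := by
    rintro c ⟨w₀, hw₀, hc₀⟩
    have hne : ((lrcWeights t).filter fun w => c w ≠ 0).Nonempty :=
      ⟨w₀, by simp [hw₀, hc₀]⟩
    obtain ⟨v, hv, hvmax⟩ := Finset.exists_max_image _ (fun w => w) hne
    rw [Finset.mem_filter] at hv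
    refine le_trans ?_ (hTb v hv.1)
    refine lrc_footprint (fun i => X i.1) (fun i => Y i.1) ?_ ?_ c (lrcWeights t) v hv.1 hv.2
      hTS ?_ ?_
    · ext i
      simpa using hcurve i.1
    · intro i j h1 h2
      exact Subtype.ext (hinj _ _ h1 h2)
    · intro w hw hcw
      exact hvmax w (by simp [hw, hcw])
    · ext i
      have := i.2
      rw [Finset.sum_apply] at this ⊢
      exact (Finset.sum_congr rfl fun w _ => rfl).trans this
  let b : lrcWeights t → (Fin 63 → F) := fun w => lrcMon X Y w.1
  have hli : LinearIndependent F b := by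
    rw [Fintype.linearIndependent_iff]
    intro g hg
    by_contra! hcon
    obtain ⟨w, hw⟩ := hcon
    have hz := hzero (fun n => if h : n ∈ lrcWeights t then g ⟨n, h⟩ else 0)
      ⟨w.1, w.2, by simpa using hw⟩
    have h0 : ∑ n ∈ lrcWeights t,
        (if h : n ∈ lrcWeights t then g ⟨n, h⟩ else 0) • lrcMon X Y n = 0 := by
      rw [← hg, ← Finset.sum_coe_sort]
      apply Finset.sum_congr rfl
      intro n _
      simp [b]
    rw [h0] at hz
    simp at hz
    omega
  refine ⟨Submodule.span F (Set.range b), ?_, ?_, ?_⟩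
  · rw [finrank_span_eq_card hli, Fintype.card_coe, lrcWeights_card t h3 h18]
  · intro x hx hx0
    obtain ⟨g, rfl⟩ := (Submodule.mem_span_range_iff_exists_fun F).1 hx
    have h0 : ∑ n ∈ lrcWeights t,
        (if h : n ∈ lrcWeights t then g ⟨n, h⟩ else 0) • lrcMon X Y n = ∑ w, g w • b w := by
      rw [← Finset.sum_coe_sort]
      apply Finset.sum_congr rfl
      intro n _
      simp [b]
    have hw : ∃ w, g w ≠ 0 := by
      by_contra! hcon
      apply hx0
      simp [hcon]
    obtain ⟨w, hw⟩ := hw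
    have hz := hzero (fun n => if h : n ∈ lrcWeights t then g ⟨n, h⟩ else 0)
      ⟨w.1, w.2, by simpa using hw⟩
    rw [h0] at hz
    rw [Nat.card_eq_fintype_card, Fintype.card_subtype_compl, Fintype.card_fin]
    omega
  · intro i
    obtain ⟨z, hz⟩ := lrc_zeta hF
    have h20 : (2 : F) = 0 := CharTwo.two_eq_zero
    have hz3 : z ^ 3 = 1 := by linear_combination (z - 1) * hz
    have hz0 : z ≠ 0 := by
      rintro rfl
      simp at hz
    have hz1 : z ≠ 1 := by
      rintro rfl
      have : (1 : F) = 0 := by linear_combination hz - h20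
      exact one_ne_zero this
    obtain ⟨j, hjX, hjY⟩ := hex (z * X i) (z ^ 2 * Y i)
      (mul_ne_zero (pow_ne_zero _ hz0) (hY i))
      (by linear_combination z ^ 2 * hcurve i + (z ^ 5 + z ^ 2) * Y i ^ 4 * hz3
            - z ^ 2 * X i ^ 5 * hz3)
    obtain ⟨k, hkX, hkY⟩ := hex (z ^ 2 * X i) (z * Y i)
      (mul_ne_zero hz0 (hY i))
      (by linear_combination z * hcurve i + z * Y i ^ 4 * hz3
            - (z ^ 7 + z ^ 4 + z) * X i ^ 5 * hz3)
    have hij : i ≠ j := by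
      rintro rfl
      have h1 : z ^ 2 = 1 := mul_right_cancel₀ (hY i) (by rw [← hjY, one_mul])
      apply hz1
      linear_combination hz3 - z * h1
    have hik : i ≠ k := by
      rintro rfl
      exact hz1 (mul_right_cancel₀ (hY i) (by rw [← hkY, one_mul]))
    have hrel : ∀ x ∈ Submodule.span F (Set.range b), x i + z ^ 2 * x j + z * x k = 0 := by
      intro x hx
      induction hx using Submodule.span_induction with
      | mem x hx =>
        obtain ⟨⟨w, hw⟩, rfl⟩ := hx
        simp only [lrcWeights, Finset.mem_filter, Finset.mem_range] at hw
        simp only [b, lrcMon, Pi.mul_apply, Pi.pow_apply, hjX, hjY, hkX, hkY]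
        obtain ⟨m, hm⟩ : ∃ m, m = (w - 5 * (w % 4)) / 4 := ⟨_, rfl⟩
        obtain ⟨l, hl⟩ : ∃ l, l = w % 4 := ⟨_, rfl⟩
        rw [← hm, ← hl]
        have hmod : (m + 2 * l) % 3 = 0 ∨ (m + 2 * l) % 3 = 2 := by omega
        have key : 1 + z ^ 2 * z ^ (m + 2 * l) + z * (z ^ (m + 2 * l)) ^ 2 = 0 := by
          have hp : z ^ (m + 2 * l) = z ^ ((m + 2 * l) % 3) := by
            conv_lhs => rw [← Nat.div_add_mod (m + 2 * l) 3, pow_add, pow_mul, hz3, one_pow, one_mul]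
          rw [hp]
          rcases hmod with h | h <;> rw [h]
          · linear_combination hz
          · linear_combination hz + z * hz3 + z ^ 2 * hz3
        have hl3 : z ^ l = (z ^ (2 * l)) ^ 2 := by
          have : (z ^ (2 * l)) ^ 2 = (z ^ 3) ^ l * z ^ l := by ring
          rw [this, hz3, one_pow, one_mul]
        have e1 : (z * X i) ^ m * (z ^ 2 * Y i) ^ l = z ^ (m + 2 * l) * (X i ^ m * Y i ^ l) := by
          ring
        have e2 : (z ^ 2 * X i) ^ m * (z * Y i) ^ l
            = (z ^ (m + 2 * l)) ^ 2 * (X i ^ m * Y i ^ l) := by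
          rw [mul_pow, mul_pow, hl3]
          ring
        rw [e1, e2]
        linear_combination (X i ^ m * Y i ^ l) * key
      | zero => simp
      | add x y _ _ hx hy =>
        simp only [Pi.add_apply]
        linear_combination hx + hy
      | smul a x _ hx =>
        simp only [Pi.smul_apply, smul_eq_mul]
        linear_combination a * hx
    refine ⟨{j, k}, by simp [hij, hik], Finset.card_le_two, ?_⟩
    intro x hx y hy h
    have h1 := h j (by simp)
    have h2 := h k (by simp)
    have e1 := hrel x hx
    have e2 := hrel y hy
    rw [h1, h2] at e1
    linear_combination e1 - e2

theorem exists_LRC_F16_length63 :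
    ∀ t : ℕ, 3 ≤ t → t ≤ 18 →
      ∃ C : Submodule (GaloisField 2 4) (Fin 63 → GaloisField 2 4),
        Module.finrank (GaloisField 2 4) C = 2 * t ∧
        (∀ x : Fin 63 → GaloisField 2 4, x ∈ C → x ≠ 0 →
          55 - 3 * t ≤ Nat.card {i : Fin 63 // x i ≠ 0}) ∧
        (∀ i : Fin 63, ∃ I : Finset (Fin 63), i ∉ I ∧ I.card ≤ 2 ∧
          ∀ x ∈ C, ∀ y ∈ C, (∀ j ∈ I, x j = y j) → x i = y i) := by
  intro t h3 h18
  have : Fintype (GaloisField 2 4) := Fintype.ofFinite _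
  have hF : Fintype.card (GaloisField 2 4) = 16 := by
    rw [← Nat.card_eq_fintype_card, GaloisField.card 2 4 (by norm_num)]
    norm_num
  exact lrc_general hF t h3 h18
end

section
/- For every integer t with 1 ≤ t ≤ 13 there exists a linear code over the field with 16 elements of length 45, dimension 2t, minimum distance at least 45 − 3t − 3 = 42 − 3t, and locality 2. In particular (t = 11), there exists a linear code over the field with 16 elements of length 45, dimension 22, minimum distance at least 9, and locality 2. -/
open Polynomial in
/-- For `x ≠ 0` the cubic `z^3 + (1+x^3+x^4) z^2 + x z + (1+x^3)` divides `z^16 - z`. -/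
lemma cubic_dvd {K : Type*} [Field K] [CharP K 2] (x : K) (hx : x ^ 15 = 1) :
    (X ^ 3 + (1 + C x ^ 3 + C x ^ 4) * X ^ 2 + C x * X + (1 + C x ^ 3) : K[X]) ∣ X ^ 16 - X := by
  have h1 : (C x : K[X]) ^ 15 = 1 := by rw [← C_pow, hx, C_1]
  have h2 : (2 : K[X]) = 0 := CharTwo.two_eq_zero
  generalize (C x : K[X]) = u at *
  refine ⟨(u^0)*X^13 + (u^0 + u^3 + u^4)*X^12 + (u^0 + u^1 + u^6 + u^8)*X^11 + (u^4 + u^6 + u^8 +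
      u^9 + u^10 + u^11 + u^12)*X^10 + (u^0 + u^2 + u^7 + u^9 + u^12)*X^9 + (u^0 + u^2 + u^8 +
      u^9 + u^11 + u^12)*X^8 + (u^2 + u^5 + u^7 + u^8 + u^9 + u^12 + u^13)*X^7 + (u^0 + u^1 +
      u^2 + u^5 + u^6 + u^10 + u^13)*X^6 + (u^0 + u^2 + u^3 + u^6 + u^8 + u^10 + u^13 +
      u^14)*X^5 + (u^1 + u^2 + u^4 + u^5 + u^7 + u^8 + u^10 + u^11 + u^12 + u^13 + u^14)*X^4 +
      (u^3 + u^5 + u^7 + u^9 + u^10)*X^3 + (u^1 + u^2 + u^5 + u^8 + u^10 + u^11 + u^13 +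
      u^14)*X^2 + (u^2 + u^3 + u^5 + u^8 + u^9 + u^11 + u^14)*X^1 + (u^2 + u^5 + u^8 + u^11 +
      u^14)*X^0, ?_⟩
  linear_combination (((-2)*u^0 + (-1)*u^1)*X^12 + ((-1)*u^0 + (-1)*u^1)*X^11 + ((-3)*u^0 + (-1)*u^1)*X^10 +
      ((-2)*u^0 + (-2)*u^1 + (-1)*u^2)*X^9 + ((-1)*u^0 + (-1)*u^1 + (-1)*u^2)*X^8 + ((-1)*u^0 +
      (-2)*u^1 + (-2)*u^2 + (-1)*u^3)*X^7 + ((-3)*u^0 + (-3)*u^1 + (-2)*u^2 + (-1)*u^3)*X^6 +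
      ((-1)*u^0 + (-1)*u^1 + (-1)*u^2)*X^5 + ((-2)*u^0 + (-2)*u^1 + (-3)*u^2 + (-1)*u^3)*X^4 +
      ((-2)*u^0 + (-1)*u^2 + (-1)*u^3)*X^3 + ((-2)*u^0 + (-1)*u^1 + (-2)*u^2 + (-1)*u^3)*X^2 +
      ((-1)*u^0 + (-1)*u^2)*X^1 + ((-1)*u^2)*X^0) * h1 + (((-1)*u^0 + (-1)*u^3 + (-1)*u^4)*X^15 + ((-1)*u^0 + (-1)*u^1 + (-1)*u^3 + (-1)*u^4 +
      (-1)*u^6 + (-1)*u^7 + (-1)*u^8)*X^14 + ((-1)*u^0 + (-1)*u^1 + (-1)*u^3 + (-2)*u^4 +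
      (-1)*u^5 + (-1)*u^6 + (-1)*u^8 + (-1)*u^9 + (-1)*u^10 + (-1)*u^11 + (-1)*u^12)*X^13 +
      ((-2)*u^0 + (-1)*u^1 + (-1)*u^2 + (-1)*u^3 + (-1)*u^4 + (-1)*u^6 + (-2)*u^7 + (-1)*u^8 +
      (-2)*u^9 + (-1)*u^10 + (-1)*u^11 + (-2)*u^12 + (-1)*u^13 + (-1)*u^14)*X^12 + ((-2)*u^0 +
      (-1)*u^1 + (-1)*u^2 + (-1)*u^3 + (-1)*u^4 + (-1)*u^5 + (-1)*u^6 + (-1)*u^7 + (-1)*u^8 +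
      (-2)*u^9 + (-1)*u^10 + (-2)*u^11 + (-2)*u^12 + (-1)*u^13)*X^11 + ((-2)*u^0 + (-1)*u^1 +
      (-1)*u^2 + (-1)*u^3 + (-1)*u^4 + (-1)*u^5 + (-1)*u^6 + (-1)*u^7 + (-2)*u^8 + (-2)*u^9 +
      (-1)*u^10 + (-2)*u^11 + (-3)*u^12 + (-2)*u^13 + (-1)*u^14)*X^10 + ((-2)*u^0 + (-2)*u^1 +
      (-2)*u^2 + (-1)*u^3 + (-2)*u^5 + (-1)*u^6 + (-1)*u^7 + (-1)*u^8 + (-2)*u^9 + (-2)*u^10 +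
      (-1)*u^11 + (-3)*u^12 + (-2)*u^13)*X^9 + ((-2)*u^0 + (-1)*u^1 + (-2)*u^2 + (-2)*u^3 +
      (-1)*u^4 + (-2)*u^5 + (-2)*u^6 + (-2)*u^8 + (-2)*u^9 + (-2)*u^10 + (-1)*u^11 + (-1)*u^12 +
      (-2)*u^13 + (-2)*u^14)*X^8 + ((-1)*u^0 + (-2)*u^1 + (-3)*u^2 + (-2)*u^3 + (-1)*u^4 +
      (-2)*u^5 + (-2)*u^6 + (-2)*u^7 + (-2)*u^8 + (-1)*u^9 + (-2)*u^10 + (-2)*u^11 + (-2)*u^12 +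
      (-2)*u^13 + (-2)*u^14)*X^7 + ((-2)*u^0 + (-3)*u^1 + (-2)*u^2 + (-2)*u^3 + (-2)*u^4 +
      (-3)*u^5 + (-1)*u^6 + (-2)*u^7 + (-2)*u^8 + (-2)*u^9 + (-2)*u^10 + (-2)*u^11 + (-1)*u^12 +
      (-2)*u^13 + (-2)*u^14)*X^6 + ((-1)*u^0 + (-1)*u^1 + (-2)*u^2 + (-2)*u^3 + (-2)*u^5 +
      (-2)*u^6 + (-1)*u^7 + (-2)*u^8 + (-2)*u^9 + (-2)*u^10 + (-2)*u^11 + (-1)*u^12 + (-3)*u^13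
      + (-2)*u^14)*X^5 + ((-1)*u^0 + (-2)*u^1 + (-3)*u^2 + (-1)*u^3 + (-2)*u^4 + (-3)*u^5 +
      (-1)*u^6 + (-1)*u^7 + (-3)*u^8 + (-1)*u^9 + (-2)*u^10 + (-3)*u^11 + (-1)*u^12 + (-2)*u^13
      + (-3)*u^14)*X^4 + ((-1)*u^0 + (-2)*u^2 + (-2)*u^3 + (-2)*u^5 + (-2)*u^6 + (-1)*u^7 +
      (-2)*u^8 + (-2)*u^9 + (-1)*u^10 + (-2)*u^11 + (-2)*u^12 + (-1)*u^13 + (-2)*u^14)*X^3 +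
      ((-1)*u^0 + (-1)*u^1 + (-2)*u^2 + (-1)*u^3 + (-1)*u^4 + (-2)*u^5 + (-1)*u^6 + (-2)*u^8 +
      (-1)*u^9 + (-1)*u^10 + (-2)*u^11 + (-1)*u^12 + (-1)*u^13 + (-2)*u^14)*X^2 + ((-1)*u^0 +
      (-1)*u^2 + (-1)*u^3 + (-1)*u^5 + (-1)*u^6 + (-1)*u^8 + (-1)*u^9 + (-1)*u^11 + (-1)*u^12 +
      (-1)*u^14)*X^1 + ((-1)*u^2 + (-1)*u^5 + (-1)*u^8 + (-1)*u^11 + (-1)*u^14)*X^0) * h2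

open Polynomial in
lemma cubic_roots {K : Type*} [Field K] [Fintype K] [CharP K 2] (hK : Fintype.card K = 16)
    (x : K) (hx : x ≠ 0) : ∃ z : Fin 3 → K, Function.Injective z ∧
      ∀ j, z j ^ 3 + (1 + x ^ 3 + x ^ 4) * z j ^ 2 + x * z j + (1 + x ^ 3) = 0 := by
  classical
  have hx15 : x ^ 15 = 1 := by
    have := FiniteField.pow_card_sub_one_eq_one x hx
    simpa [hK] using this
  obtain ⟨G, hG⟩ := cubic_dvd x hx15
  set F : K[X] := X ^ 3 + (1 + C x ^ 3 + C x ^ 4) * X ^ 2 + C x * X + (1 + C x ^ 3) with hF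
  have hdeg : F.natDegree = 3 := by
    have : F = C 1 * X ^ 3 + C (1 + x ^ 3 + x ^ 4) * X ^ 2 + C x * X + C (1 + x ^ 3) := by
      simp [hF]
    rw [this]; exact natDegree_cubic one_ne_zero
  have hne : (X ^ 16 - X : K[X]) ≠ 0 := by
    have := FiniteField.X_pow_card_sub_X_ne_zero K (p := 16) (by norm_num)
    simpa using this
  have hroots : (X ^ 16 - X : K[X]).roots = Finset.univ.val := by
    have := FiniteField.roots_X_pow_card_sub_X K
    rwa [hK] at this
  have hdvd : F ∣ X ^ 16 - X := ⟨G, hG⟩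
  have hle : F.roots ≤ Finset.univ.val := by
    rw [← hroots]; exact roots.le_of_dvd hne hdvd
  have hnd : F.roots.Nodup := Multiset.nodup_of_le hle Finset.univ.nodup
  have hsp : (X ^ 16 - X : K[X]).Splits := by
    rw [splits_iff_card_roots, hroots]
    have : (X ^ 16 - X : K[X]).natDegree = 16 := by
      have := FiniteField.X_pow_card_sub_X_natDegree_eq K (p := 16) (by norm_num)
      simpa using this
    rw [this]; simpa using hK
  have hFs : F.Splits := hsp.of_dvd hne hdvd
  have hcard : F.roots.card = 3 := by
    rw [← hdeg]; exact (splits_iff_card_roots.1 hFs)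
  have hfc : F.roots.toFinset.card = 3 := by
    rw [Multiset.toFinset_card_of_nodup hnd, hcard]
  let e := (F.roots.toFinset.equivFinOfCardEq hfc).symm
  refine ⟨fun j => (e j : K), fun i j h => e.injective (Subtype.ext h), fun j => ?_⟩
  have := (e j).2
  rw [Multiset.mem_toFinset] at this
  have := isRoot_of_mem_roots this
  simpa [hF, IsRoot] using this

lemma cubic_zero {K : Type*} [Field K] [Fintype K] [CharP K 2] (hK : Fintype.card K = 16)
    (a b : K) (h : a ^ 3 + a ^ 2 * b + b ^ 3 = 0) : a = 0 ∧ b = 0 := by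
  have h2 : (2 : K) = 0 := CharTwo.two_eq_zero
  by_cases hb : b = 0
  · subst hb; simpa using h
  exfalso
  obtain ⟨z, hz⟩ : ∃ z, z = a / b := ⟨_, rfl⟩
  have ha : a = z * b := by rw [hz]; field_simp
  have hz3 : z ^ 3 + z ^ 2 + 1 = 0 := by
    have : b ^ 3 * (z ^ 3 + z ^ 2 + 1) = 0 := by rw [← h, ha]; ring
    simpa [hb] using this
  have h16 : z ^ 16 = z := by
    have := FiniteField.pow_card z
    rwa [hK] at this
  have h8 : z ^ 8 = z := by
    linear_combination (z ^ 5 - z ^ 4 + z ^ 3 - 2 * z ^ 2 + 3 * z - 4) * hz3 + (3 * z ^ 2 - 2 * z + 2) * h2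
  have h3 : z ^ 2 = z := by
    calc z ^ 2 = (z ^ 8) ^ 2 := by rw [h8]
      _ = z := by rw [← pow_mul]; exact h16
  have : (1 : K) = 0 := by
    linear_combination hz3 - (z + 2) * h3 - z * h2
  exact one_ne_zero this

open Polynomial in
noncomputable def normForm {K : Type*} [Field K] (a b : K[X]) : K[X] :=
  a ^ 3 + (1 + X ^ 3 + X ^ 4) * a ^ 2 * b + X * a * b ^ 2 + (1 + X ^ 3) * b ^ 3

open Polynomial in
lemma normForm_mul {K : Type*} [Field K] (c a b : K[X]) :
    normForm (c * a) (c * b) = c ^ 3 * normForm a b := by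
  unfold normForm; ring

open Polynomial in
lemma normForm_eq_zero {K : Type*} [Field K] [Fintype K] [CharP K 2]
    (hK : Fintype.card K = 16) (a b : K[X]) (h : normForm a b = 0) : a = 0 ∧ b = 0 := by
  have key : ∀ n : ℕ, X ^ n ∣ a ∧ X ^ n ∣ b := by
    intro n
    induction n with
    | zero => simp
    | succ n ih =>
      obtain ⟨⟨a', rfl⟩, ⟨b', rfl⟩⟩ := ih
      rw [normForm_mul] at h
      have h' : normForm a' b' = 0 := by
        rcases mul_eq_zero.1 h with h | h
        · exact absurd h (by simp)
        · exact h
      have h0 := congrArg (eval 0) h'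
      have := cubic_zero hK (a'.eval 0) (b'.eval 0) (by simpa [normForm] using h0)
      have ha : X ∣ a' := X_dvd_iff.2 (by rw [coeff_zero_eq_eval_zero]; exact this.1)
      have hb : X ∣ b' := X_dvd_iff.2 (by rw [coeff_zero_eq_eval_zero]; exact this.2)
      rw [pow_succ]
      exact ⟨mul_dvd_mul_left _ ha, mul_dvd_mul_left _ hb⟩
  have aux : ∀ p : K[X], (∀ n : ℕ, X ^ n ∣ p) → p = 0 := by
    intro p hp
    ext n
    exact X_pow_dvd_iff.1 (hp (n + 1)) n (Nat.lt_succ_self n)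
  exact ⟨aux a fun n => (key n).1, aux b fun n => (key n).2⟩

open Polynomial in
lemma normForm_natDegree {K : Type*} [Field K] (t : ℕ) (a b : K[X])
    (ha : a.natDegree ≤ t) (hb : b.natDegree ≤ t) : (normForm a b).natDegree ≤ 3 * t + 6 := by
  have e1 : (a ^ 3).natDegree ≤ 3 * t := natDegree_pow_le_of_le 3 ha
  have e2 : (a ^ 2).natDegree ≤ 2 * t := natDegree_pow_le_of_le 2 ha
  have e3 : (b ^ 2).natDegree ≤ 2 * t := natDegree_pow_le_of_le 2 hb
  have e4 : (b ^ 3).natDegree ≤ 3 * t := natDegree_pow_le_of_le 3 hb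
  have f1 : (1 + X ^ 3 + X ^ 4 : K[X]).natDegree ≤ 4 := by compute_degree
  have f2 : (X : K[X]).natDegree ≤ 1 := natDegree_X_le
  have f3 : (1 + X ^ 3 : K[X]).natDegree ≤ 3 := by compute_degree
  unfold normForm
  refine natDegree_add_le_of_degree_le (natDegree_add_le_of_degree_le
    (natDegree_add_le_of_degree_le (e1.trans (by omega)) ?_) ?_) ?_
  · exact (natDegree_mul_le_of_le (natDegree_mul_le_of_le f1 e2) hb).trans (by omega)
  · exact (natDegree_mul_le_of_le (natDegree_mul_le_of_le f2 ha) e3).trans (by omega)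
  · exact (natDegree_mul_le_of_le f3 e4).trans (by omega)

open Polynomial in
/-- Zeros of `a + b z` in one fibre are bounded by the multiplicity of the norm. -/
lemma fibre_bound {K : Type*} [Field K] [DecidableEq K] [CharP K 2] (a b : K[X]) (x : K)
    (z : Fin 3 → K) (hz : Function.Injective z)
    (hr : ∀ j, z j ^ 3 + (1 + x ^ 3 + x ^ 4) * z j ^ 2 + x * z j + (1 + x ^ 3) = 0)
    (hN : normForm a b ≠ 0) :
    (Finset.univ.filter fun j : Fin 3 => a.eval x + b.eval x * z j = 0).card
      ≤ (normForm a b).rootMultiplicity x := by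
  set S := Finset.univ.filter fun j : Fin 3 => a.eval x + b.eval x * z j = 0 with hS
  by_cases h1 : 1 < S.card
  · obtain ⟨i, hi, j, hj, hij⟩ := Finset.one_lt_card.1 h1
    simp only [hS, Finset.mem_filter, Finset.mem_univ, true_and] at hi hj
    have hb : b.eval x = 0 := by
      have : b.eval x * (z i - z j) = 0 := by linear_combination hi - hj
      rcases mul_eq_zero.1 this with h | h
      · exact h
      · exact absurd (hz (sub_eq_zero.1 h)) hij
    have ha : a.eval x = 0 := by simpa [hb] using hi
    obtain ⟨a', rfl⟩ := dvd_iff_isRoot.2 ha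
    obtain ⟨b', rfl⟩ := dvd_iff_isRoot.2 hb
    have : 3 ≤ (normForm ((X - C x) * a') ((X - C x) * b')).rootMultiplicity x := by
      rw [le_rootMultiplicity_iff hN, normForm_mul]
      exact dvd_mul_right _ _
    exact (Finset.card_le_univ S).trans (by simpa using this)
  · rcases Nat.eq_zero_or_pos S.card with h0 | h0
    · omega
    · obtain ⟨j, hj⟩ := Finset.card_pos.1 h0
      simp only [hS, Finset.mem_filter, Finset.mem_univ, true_and] at hj
      have hroot : (normForm a b).IsRoot x := by
        have ha : a.eval x = b.eval x * z j := CharTwo.add_eq_zero.1 hj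
        simp only [IsRoot, normForm, eval_add, eval_mul, eval_pow, eval_one, eval_X, ha]
        linear_combination (b.eval x) ^ 3 * hr j
      have := (rootMultiplicity_pos hN).2 hroot
      omega

open Polynomial in
lemma exists_code {K : Type*} [Field K] [Fintype K] [CharP K 2] (hK : Fintype.card K = 16)
    (t : ℕ) (ht : 1 ≤ t) (ht' : t ≤ 13) :
      ∃ C : Submodule K (Fin 45 → K),
        Module.finrank K C = 2 * t ∧
        (∀ x : Fin 45 → K, x ∈ C → x ≠ 0 →
          42 - 3 * t ≤ Nat.card {i : Fin 45 // x i ≠ 0}) ∧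
        (∀ i : Fin 45, ∃ I : Finset (Fin 45), i ∉ I ∧ I.card ≤ 2 ∧
          ∀ x ∈ C, ∀ y ∈ C, (∀ j ∈ I, x j = y j) → x i = y i) := by
  classical
  choose z hz hr using fun x : Kˣ => cubic_roots hK (x : K) x.ne_zero
  have hcard : Fintype.card (Kˣ × Fin 3) = 45 := by
    rw [Fintype.card_prod, Fintype.card_units, hK]; simp
  let e : Fin 45 ≃ Kˣ × Fin 3 := (Fintype.equivFinOfCardEq hcard).symm
  let ev : (degreeLT K t × degreeLT K t) →ₗ[K] (Fin 45 → K) :=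
    { toFun := fun p i => (p.1 : K[X]).eval ((e i).1 : K) +
        (p.2 : K[X]).eval ((e i).1 : K) * z (e i).1 (e i).2
      map_add' := by
        intro p q; funext i
        simp only [Prod.fst_add, Prod.snd_add, Submodule.coe_add, eval_add, Pi.add_apply]
        ring
      map_smul' := by
        intro c p; funext i
        simp only [Prod.smul_fst, Prod.smul_snd, Submodule.coe_smul, eval_smul, smul_eq_mul,
          Pi.smul_apply, RingHom.id_apply]
        ring }
  have hev : ∀ p i, ev p i = (p.1 : K[X]).eval ((e i).1 : K) +
        (p.2 : K[X]).eval ((e i).1 : K) * z (e i).1 (e i).2 := fun p i => rfl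
  have hnd : ∀ p : degreeLT K t, (p : K[X]).natDegree ≤ t - 1 := by
    intro p
    have := mem_degreeLT.1 p.2
    by_cases h0 : (p : K[X]) = 0
    · simp [h0]
    · have := (natDegree_lt_iff_degree_lt h0).2 this
      omega
  -- number of zeros
  have hzeros : ∀ p, p ≠ 0 →
      (Finset.univ.filter fun i : Fin 45 => ev p i = 0).card ≤ 3 * t + 3 := by
    intro p hp
    set a : K[X] := (p.1 : K[X]) with ha
    set b : K[X] := (p.2 : K[X]) with hb
    have hN : normForm a b ≠ 0 := by
      intro h
      obtain ⟨h1, h2⟩ := normForm_eq_zero hK a b h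
      exact hp (Prod.ext (Subtype.ext h1) (Subtype.ext h2))
    have hdeg : (normForm a b).natDegree ≤ 3 * t + 3 :=
      (normForm_natDegree (t - 1) a b (hnd _) (hnd _)).trans (by omega)
    calc (Finset.univ.filter fun i : Fin 45 => ev p i = 0).card
        = (Finset.univ.filter fun q : Kˣ × Fin 3 =>
            a.eval (q.1 : K) + b.eval (q.1 : K) * z q.1 q.2 = 0).card := by
          refine Finset.card_equiv e ?_
          intro i
          simp [hev, ha, hb]
      _ = ∑ x : Kˣ, (Finset.univ.filter fun j : Fin 3 =>
            a.eval (x : K) + b.eval (x : K) * z x j = 0).card := by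
          simp only [Finset.card_filter]
          rw [Fintype.sum_prod_type]
      _ ≤ ∑ x : Kˣ, (normForm a b).rootMultiplicity (x : K) :=
          Finset.sum_le_sum fun x _ => fibre_bound a b x (z x) (hz x) (hr x) hN
      _ = ∑ y ∈ Finset.univ.map ⟨((↑) : Kˣ → K), Units.val_injective⟩,
            (normForm a b).roots.count y := by
          rw [Finset.sum_map]; simp
      _ ≤ (normForm a b).roots.card := by
          rw [← Multiset.sum_count_eq_card (s := Finset.univ) (by simp)]
          exact Finset.sum_le_sum_of_subset (Finset.subset_univ _)
      _ ≤ (normForm a b).natDegree := card_roots' _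
      _ ≤ 3 * t + 3 := hdeg
  have hinj : Function.Injective ev := by
    rw [injective_iff_map_eq_zero]
    intro p hp
    by_contra h
    have := hzeros p h
    rw [hp] at this
    simp at this
    omega
  refine ⟨LinearMap.range ev, ?_, ?_, ?_⟩
  · rw [LinearMap.finrank_range_of_inj hinj, Module.finrank_prod,
      (degreeLTEquiv K t).finrank_eq]
    simp; ring
  · rintro _ ⟨p, rfl⟩ hne
    have hp : p ≠ 0 := by rintro rfl; simp at hne
    have h1 := hzeros p hp
    have h2 := Finset.card_filter_add_card_filter_not (s := (Finset.univ : Finset (Fin 45)))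
      (fun i => ev p i = 0)
    rw [Nat.card_eq_fintype_card, Fintype.card_subtype]
    simp only [Finset.card_univ, Fintype.card_fin] at h2
    simp only [ne_eq]
    omega
  · intro i
    set x := (e i).1 with hx
    set k := (e i).2 with hk
    refine ⟨(Finset.univ.erase k).image fun j => e.symm (x, j), ?_, ?_, ?_⟩
    · simp only [Finset.mem_image, Finset.mem_erase, not_exists, not_and]
      intro j hj hji
      apply hj.1
      rw [Equiv.symm_apply_eq] at hji
      rw [hk, ← hji]
    · refine Finset.card_image_le.trans ?_
      simp
    · rintro _ ⟨p, rfl⟩ _ ⟨q, rfl⟩ h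
      obtain ⟨j, l, hjk, hlk, hjl⟩ : ∃ j l : Fin 3, j ≠ k ∧ l ≠ k ∧ j ≠ l := by
        exact (by decide : ∀ k : Fin 3, ∃ j l : Fin 3, j ≠ k ∧ l ≠ k ∧ j ≠ l) k
      have hj := h (e.symm (x, j)) (Finset.mem_image_of_mem _ (by simp [hjk]))
      have hl := h (e.symm (x, l)) (Finset.mem_image_of_mem _ (by simp [hlk]))
      simp only [hev, Equiv.apply_symm_apply] at hj hl ⊢
      rw [← hx, ← hk]
      have hzz : z x j - z x l ≠ 0 := sub_ne_zero.2 fun h => hjl (hz x h)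
      have hb : (p.2 : K[X]).eval (x : K) = (q.2 : K[X]).eval (x : K) := by
        apply mul_right_cancel₀ hzz
        linear_combination hj - hl
      rw [hb] at hj ⊢
      rw [add_right_cancel hj]

theorem exists_LRC_F16_length45 :
    ∀ t : ℕ, 1 ≤ t → t ≤ 13 →
      ∃ C : Submodule (GaloisField 2 4) (Fin 45 → GaloisField 2 4),
        Module.finrank (GaloisField 2 4) C = 2 * t ∧
        (∀ x : Fin 45 → GaloisField 2 4, x ∈ C → x ≠ 0 →
          42 - 3 * t ≤ Nat.card {i : Fin 45 // x i ≠ 0}) ∧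
        (∀ i : Fin 45, ∃ I : Finset (Fin 45), i ∉ I ∧ I.card ≤ 2 ∧
          ∀ x ∈ C, ∀ y ∈ C, (∀ j ∈ I, x j = y j) → x i = y i) := by
  intro t h1 h2
  haveI : Fintype (GaloisField 2 4) := Fintype.ofFinite _
  refine exists_code ?_ t h1 h2
  rw [← Nat.card_eq_fintype_card, GaloisField.card 2 4 (by norm_num)]
  norm_num
end
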